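/- arXiv:2310.02244 — 2 statements merged into one kernel-verified Lean document; each statement's English description precedes it below -/
import Mathlib

section
/- With Γ^L and C^L as defined in the context, for every pair 0 ≤ s ≤ t ≤ T−1 the limit K(t,s) := lim_{k→∞} C^{2^k}_{t,s,1}(1) exists. (K(t,s) is the limiting covariance kernel ⟨x_s^L | x_t^L⟩ of the final-layer features of the linear residual network across SGD steps, i.e., the kernel of the zero-mean Gaussian process to which the final-layer features converge in the infinite-width-then-infinite-depth limit.) -/
open MeasureTheory Set Finset Filter Topology

/-- The defining recursion (from the Tensor-Program analysis of a depth-`L` linear residual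
network `x^l = x^{l−1} + L^{−1/2} W^l x^{l−1}` trained for `T` SGD steps under Depth-μP)
for the coefficient functions `Γ^L_{t,r,a,b}(p,q)` and covariance functions `C^L_{t,s,a}(p)`,
together with the output values `f̊_t` and loss derivatives `χ̊_t = ℓ'_t(f̊_t)`.

Conventions: Booleans encode the indices `a, b ∈ {0,1}` (`false = 0`, `true = 1`); the
time index `r, s = −1` refers to the input/output layers `U, V`; `C_{−1,−1,·} ≡ 1`;
`C_{t,s,·} ≡ 0` if exactly one of `t, s` is `−1`; `C` is symmetric; `Γ_{s,r,·,·} ≡ 0` for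
`r > s`; `Γ^L` is constant in `p` on each interval `((l−1)/L, l/L]`. -/
structure IsLinearTP (T L : ℕ) (ξ : ℕ → ℝ) (ℓ' : ℕ → ℝ → ℝ)
    (Γ : ℕ → ℤ → Bool → Bool → ℝ → ℝ → ℝ)
    (C : ℤ → ℤ → Bool → ℝ → ℝ)
    (f χ : ℕ → ℝ) : Prop where
  C_symm : ∀ (t s : ℤ) (b : Bool) (p : ℝ), C t s b p = C s t b p
  C_base : ∀ (b : Bool) (p : ℝ), C (-1) (-1) b p = 1
  C_mixed : ∀ t : ℤ, 0 ≤ t → ∀ (b : Bool) (p : ℝ), C t (-1) b p = 0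
  Γ_vanish : ∀ (t : ℕ) (r : ℤ), (t : ℤ) < r → ∀ (a b : Bool) (p q : ℝ), Γ t r a b p q = 0
  Γ_const : ∀ t : ℕ, t < T → ∀ r : ℤ, -1 ≤ r → r ≤ (t : ℤ) → ∀ a b : Bool,
    ∀ l : ℕ, 1 ≤ l → l ≤ L → ∀ p q : ℝ, ((l : ℝ) - 1) / L < p → p ≤ (l : ℝ) / L →
      0 < q → q ≤ 1 → Γ t r a b p q = Γ t r a b ((l : ℝ) / L) q
  fwd_init : ∀ t : ℕ, t < T → ∀ r : ℤ, -1 ≤ r → r ≤ (t : ℤ) → ∀ b : Bool,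
    ∀ q : ℝ, 0 < q → q ≤ 1 →
      Γ t r false b 0 q = if r = -1 ∧ b = false then ξ t else 0
  fwd_step : ∀ t : ℕ, t < T → ∀ l : ℕ, 1 ≤ l → l ≤ L → ∀ r : ℤ, -1 ≤ r → r ≤ (t : ℤ) →
    ∀ b : Bool, ∀ p q : ℝ, ((l : ℝ) - 1) / L < p → p ≤ (l : ℝ) / L → 0 < q → q ≤ 1 →
      Γ t r false b p q =
        Γ t r false b (((l : ℝ) - 1) / L) q
          + (if (t : ℤ) = r ∧ b = false ∧ (l : ℤ) = ⌈(L : ℝ) * q⌉ then 1 else 0)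
          + (1 / (L : ℝ)) * ∑ s ∈ Finset.range t,
              Γ s r true b ((l : ℝ) / L) q *
                (Γ t (s : ℤ) false true (((l : ℝ) - 1) / L) ((l : ℝ) / L)
                  - C (t : ℤ) (s : ℤ) false ((l : ℝ) / L))
  fwd_C : ∀ t : ℕ, t < T → ∀ s : ℕ, s ≤ t → ∀ l : ℕ, 1 ≤ l → l ≤ L →
    ∀ p : ℝ, ((l : ℝ) - 1) / L < p → p ≤ (l : ℝ) / L →
      C (t : ℤ) (s : ℤ) false p =
        ∑ t' ∈ Finset.Icc (-1 : ℤ) (t : ℤ), ∑ s' ∈ Finset.Icc (-1 : ℤ) (s : ℤ), ∑ b : Bool,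
          ∫ q in Ioc (0 : ℝ) 1,
            Γ t t' false b (((l : ℝ) - 1) / L) q * C t' s' b q *
              Γ s s' false b (((l : ℝ) - 1) / L) q
  f_def : ∀ t : ℕ, t < T → f t = Γ t (-1) false true 1 1
  χ_def : ∀ t : ℕ, t < T → χ t = ℓ' t (f t)
  bwd_init : ∀ t : ℕ, t < T → ∀ r : ℤ, -1 ≤ r → r ≤ (t : ℤ) → ∀ b : Bool,
    ∀ q : ℝ, 0 < q → q ≤ 1 →
      Γ t r true b 1 q = if r = -1 ∧ b = true then χ t else 0
  bwd_step : ∀ t : ℕ, t < T → ∀ l : ℕ, 1 ≤ l → l ≤ L → ∀ r : ℤ, -1 ≤ r → r ≤ (t : ℤ) →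
    ∀ b : Bool, ∀ p q : ℝ, ((l : ℝ) - 2) / L < p → p ≤ ((l : ℝ) - 1) / L → 0 ≤ p →
      0 < q → q ≤ 1 →
      Γ t r true b p q =
        Γ t r true b ((l : ℝ) / L) q
          + (if (t : ℤ) = r ∧ b = true ∧ (l : ℤ) = ⌈(L : ℝ) * q⌉ then 1 else 0)
          + (1 / (L : ℝ)) * ∑ s ∈ Finset.range t,
              Γ s r false b (((l : ℝ) - 1) / L) q *
                (Γ t (s : ℤ) true false ((l : ℝ) / L) ((l : ℝ) / L)
                  - C (t : ℤ) (s : ℤ) true ((l : ℝ) / L))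
  bwd_C : ∀ t : ℕ, t < T → ∀ s : ℕ, s ≤ t → ∀ l : ℕ, 1 ≤ l → l ≤ L →
    ∀ p : ℝ, ((l : ℝ) - 1) / L < p → p ≤ (l : ℝ) / L →
      C (t : ℤ) (s : ℤ) true p =
        ∑ t' ∈ Finset.Icc (-1 : ℤ) (t : ℤ), ∑ s' ∈ Finset.Icc (-1 : ℤ) (s : ℤ), ∑ b : Bool,
          ∫ q in Ioc (0 : ℝ) 1,
            Γ t t' true b ((l : ℝ) / L) q * C t' s' b q * Γ s s' true b ((l : ℝ) / L) q

/-! ### Asymptotically convergent families of arrays -/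

/-- `x / L` and `y / L'` are `δ`-close grid points. -/
def Nr (δ : ℝ) (L L' x y : ℕ) : Prop := x < L ∧ y < L' ∧ |(x : ℝ) / L - (y : ℝ) / L'| < δ

/-- Uniform boundedness of a family of arrays. -/
def Bd (F : ℕ → ℕ → ℕ → ℕ → ℝ) : Prop :=
  ∃ B : ℝ, 0 ≤ B ∧ ∃ N : ℕ, ∀ L ≥ N, ∀ l < L, ∀ j < L, ∀ m < L, |F L l j m| ≤ B

/-- The family of arrays converges uniformly to a continuous function
(away from the diagonals `m = l`, `m = j` if `s` holds), stated in Cauchy form. -/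
def NC (s : Prop) (F : ℕ → ℕ → ℕ → ℕ → ℝ) : Prop :=
  Bd F ∧ ∀ ε > 0, ∃ δ > 0, ∃ N : ℕ, ∀ L ≥ N, ∀ L' ≥ N, ∀ l j m l' j' m' : ℕ,
    Nr δ L L' l l' → Nr δ L L' j j' → Nr δ L L' m m' →
    (s → ε ≤ |(m : ℝ) / L - (l : ℝ) / L| ∧ ε ≤ |(m : ℝ) / L - (j : ℝ) / L|) →
    |F L l j m - F L' l' j' m'| ≤ ε

theorem Nr.mono {δ δ' : ℝ} {L L' x y : ℕ} (h : Nr δ L L' x y) (hd : δ ≤ δ') : Nr δ' L L' x y :=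
  ⟨h.1, h.2.1, lt_of_lt_of_le h.2.2 hd⟩

theorem Bd.congr {F G : ℕ → ℕ → ℕ → ℕ → ℝ} (hF : Bd F)
    (h : ∀ L l j m, l < L → j < L → m < L → F L l j m = G L l j m) : Bd G := by
  obtain ⟨B, hB, N, hN⟩ := hF
  exact ⟨B, hB, N, fun L hL l hl j hj m hm => by rw [← h L l j m hl hj hm]; exact hN L hL l hl j hj m hm⟩

theorem NC.congr {s : Prop} {F G : ℕ → ℕ → ℕ → ℕ → ℝ} (hF : NC s F)
    (h : ∀ L l j m, l < L → j < L → m < L → F L l j m = G L l j m) : NC s G := by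
  refine ⟨hF.1.congr h, fun ε hε => ?_⟩
  obtain ⟨δ, hδ, N, hN⟩ := hF.2 ε hε
  refine ⟨δ, hδ, N, fun L hL L' hL' l j m l' j' m' hl hj hm hs => ?_⟩
  rw [← h L l j m hl.1 hj.1 hm.1, ← h L' l' j' m' hl.2.1 hj.2.1 hm.2.1]
  exact hN L hL L' hL' l j m l' j' m' hl hj hm hs

theorem NC.weaken {s : Prop} {F : ℕ → ℕ → ℕ → ℕ → ℝ} (hF : NC False F) : NC s F := by
  refine ⟨hF.1, fun ε hε => ?_⟩
  obtain ⟨δ, hδ, N, hN⟩ := hF.2 ε hε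
  exact ⟨δ, hδ, N, fun L hL L' hL' l j m l' j' m' hl hj hm _ =>
    hN L hL L' hL' l j m l' j' m' hl hj hm False.elim⟩

theorem NC.const (s : Prop) (x : ℝ) : NC s (fun _ _ _ _ => x) :=
  ⟨⟨|x|, abs_nonneg _, 0, fun _ _ _ _ _ _ _ _ => le_rfl⟩, fun ε hε => ⟨1, one_pos, 0, by
    intros; simpa using hε.le⟩⟩

theorem Bd.add {F G : ℕ → ℕ → ℕ → ℕ → ℝ} (hF : Bd F) (hG : Bd G) :
    Bd (fun L l j m => F L l j m + G L l j m) := by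
  obtain ⟨B, hB, N, hN⟩ := hF
  obtain ⟨B', hB', N', hN'⟩ := hG
  refine ⟨B + B', by positivity, max N N', fun L hL l hl j hj m hm => ?_⟩
  exact (abs_add_le _ _).trans (add_le_add (hN L (le_trans (le_max_left _ _) hL) l hl j hj m hm)
    (hN' L (le_trans (le_max_right _ _) hL) l hl j hj m hm))

theorem Bd.mul {F G : ℕ → ℕ → ℕ → ℕ → ℝ} (hF : Bd F) (hG : Bd G) :
    Bd (fun L l j m => F L l j m * G L l j m) := by
  obtain ⟨B, hB, N, hN⟩ := hF
  obtain ⟨B', hB', N', hN'⟩ := hG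
  refine ⟨B * B', by positivity, max N N', fun L hL l hl j hj m hm => ?_⟩
  rw [abs_mul]
  exact mul_le_mul (hN L (le_trans (le_max_left _ _) hL) l hl j hj m hm)
    (hN' L (le_trans (le_max_right _ _) hL) l hl j hj m hm) (abs_nonneg _) hB

theorem NC.add {s : Prop} {F G : ℕ → ℕ → ℕ → ℕ → ℝ} (hF : NC s F) (hG : NC s G) :
    NC s (fun L l j m => F L l j m + G L l j m) := by
  refine ⟨hF.1.add hG.1, fun ε hε => ?_⟩
  obtain ⟨δ, hδ, N, hN⟩ := hF.2 (ε / 2) (by positivity)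
  obtain ⟨δ', hδ', N', hN'⟩ := hG.2 (ε / 2) (by positivity)
  refine ⟨min δ δ', lt_min hδ hδ', max N N', fun L hL L' hL' l j m l' j' m' hl hj hm hs => ?_⟩
  have hs' : s → ε / 2 ≤ |(m : ℝ) / L - (l : ℝ) / L| ∧ ε / 2 ≤ |(m : ℝ) / L - (j : ℝ) / L| :=
    fun h => ⟨by linarith [(hs h).1], by linarith [(hs h).2]⟩
  have h1 := hN L (le_trans (le_max_left _ _) hL) L' (le_trans (le_max_left _ _) hL') l j m l' j' m'
    (hl.mono (min_le_left _ _)) (hj.mono (min_le_left _ _)) (hm.mono (min_le_left _ _)) hs'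
  have h2 := hN' L (le_trans (le_max_right _ _) hL) L' (le_trans (le_max_right _ _) hL')
    l j m l' j' m'
    (hl.mono (min_le_right _ _)) (hj.mono (min_le_right _ _)) (hm.mono (min_le_right _ _)) hs'
  rw [abs_le] at *
  constructor <;> linarith [h1.1, h1.2, h2.1, h2.2]

theorem NC.mul {s : Prop} {F G : ℕ → ℕ → ℕ → ℕ → ℝ} (hF : NC s F) (hG : NC s G) :
    NC s (fun L l j m => F L l j m * G L l j m) := by
  refine ⟨hF.1.mul hG.1, fun ε hε => ?_⟩
  obtain ⟨B, hB, M, hM⟩ := hF.1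
  obtain ⟨B', hB', M', hM'⟩ := hG.1
  set η := ε / (B + B' + 1) with hη
  have hηpos : 0 < η := by positivity
  have hηle : η ≤ ε := div_le_self hε.le (by linarith)
  have hηeq : η * (B + B' + 1) = ε := by rw [hη]; field_simp
  obtain ⟨δ, hδ, N, hN⟩ := hF.2 η hηpos
  obtain ⟨δ', hδ', N', hN'⟩ := hG.2 η hηpos
  refine ⟨min δ δ', lt_min hδ hδ', max (max N N') (max M M'),
    fun L hL L' hL' l j m l' j' m' hl hj hm hs => ?_⟩
  simp only [ge_iff_le, max_le_iff] at hL hL'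
  have hs' : s → η ≤ |(m : ℝ) / L - (l : ℝ) / L| ∧ η ≤ |(m : ℝ) / L - (j : ℝ) / L| :=
    fun h => ⟨by linarith [(hs h).1], by linarith [(hs h).2]⟩
  have h1 := hN L hL.1.1 L' hL'.1.1 l j m l' j' m'
    (hl.mono (min_le_left _ _)) (hj.mono (min_le_left _ _)) (hm.mono (min_le_left _ _)) hs'
  have h2 := hN' L hL.1.2 L' hL'.1.2 l j m l' j' m'
    (hl.mono (min_le_right _ _)) (hj.mono (min_le_right _ _)) (hm.mono (min_le_right _ _)) hs'
  have h3 := hM L hL.2.1 l hl.1 j hj.1 m hm.1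
  have h4 := hM' L' hL'.2.2 l' hl.2.1 j' hj.2.1 m' hm.2.1
  have e : F L l j m * G L l j m - F L' l' j' m' * G L' l' j' m' =
      F L l j m * (G L l j m - G L' l' j' m') + (F L l j m - F L' l' j' m') * G L' l' j' m' := by
    ring
  rw [e]
  calc _ ≤ |F L l j m * (G L l j m - G L' l' j' m')|
        + |(F L l j m - F L' l' j' m') * G L' l' j' m'| := abs_add_le _ _
    _ ≤ B * η + η * B' := by
        rw [abs_mul, abs_mul]
        gcongr
    _ ≤ ε := by nlinarith

theorem NC.sum {s : Prop} {ι : Type*} (S : Finset ι) {F : ι → ℕ → ℕ → ℕ → ℕ → ℝ}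
    (hF : ∀ i ∈ S, NC s (F i)) : NC s (fun L l j m => ∑ i ∈ S, F i L l j m) := by
  classical
  induction S using Finset.induction_on with
  | empty => simpa using NC.const s 0
  | insert a S ha ih =>
    simp only [Finset.sum_insert ha]
    exact (hF a (Finset.mem_insert_self _ _)).add
      (ih fun i hi => hF i (Finset.mem_insert_of_mem hi))

theorem NC.sub {s : Prop} {F G : ℕ → ℕ → ℕ → ℕ → ℝ} (hF : NC s F) (hG : NC s G) :
    NC s (fun L l j m => F L l j m - G L l j m) :=
  (hF.add ((NC.const s (-1)).mul hG)).congr fun L l j m _ _ _ => by ring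

/-- A substitution of variables. -/
def Pj (u : ℕ → ℕ → ℕ → ℕ) : Prop :=
  ∀ R : ℕ → ℕ → Prop, ∀ l j m l' j' m', R l l' → R j j' → R m m' → R (u l j m) (u l' j' m')

theorem Pj1 : Pj (fun l _ _ => l) := fun _ _ _ _ _ _ _ h _ _ => h
theorem Pj2 : Pj (fun _ j _ => j) := fun _ _ _ _ _ _ _ _ h _ => h
theorem Pj3 : Pj (fun _ _ m => m) := fun _ _ _ _ _ _ _ _ _ h => h

theorem NC.app {s : Prop} {F : ℕ → ℕ → ℕ → ℕ → ℝ} (hF : NC False F) {u v w : ℕ → ℕ → ℕ → ℕ}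
    (hu : Pj u) (hv : Pj v) (hw : Pj w) :
    NC s (fun L l j m => F L (u l j m) (v l j m) (w l j m)) := by
  refine NC.weaken ⟨?_, fun ε hε => ?_⟩
  · obtain ⟨B, hB, N, hN⟩ := hF.1
    exact ⟨B, hB, N, fun L hL l hl j hj m hm => hN L hL _
      (hu (fun x _ => x < L) l j m l j m hl hj hm) _ (hv (fun x _ => x < L) l j m l j m hl hj hm)
      _ (hw (fun x _ => x < L) l j m l j m hl hj hm)⟩
  · obtain ⟨δ, hδ, N, hN⟩ := hF.2 ε hε
    exact ⟨δ, hδ, N, fun L hL L' hL' l j m l' j' m' hl hj hm hs =>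
      hN L hL L' hL' _ _ _ _ _ _ (hu _ l j m l' j' m' hl hj hm) (hv _ l j m l' j' m' hl hj hm)
        (hw _ l j m l' j' m' hl hj hm) False.elim⟩

/-- Uniform limits. -/
theorem NC.of_approx {F : ℕ → ℕ → ℕ → ℕ → ℝ}
    (h : ∀ ε > 0, ∃ G, NC False G ∧ ∃ N : ℕ, ∀ L ≥ N, ∀ l < L, ∀ j < L, ∀ m < L,
      |F L l j m - G L l j m| ≤ ε) : NC False F := by
  constructor
  · obtain ⟨G, hG, N, hN⟩ := h 1 one_pos
    obtain ⟨B, hB, M, hM⟩ := hG.1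
    refine ⟨B + 1, by positivity, max N M, fun L hL l hl j hj m hm => ?_⟩
    have h1 := hN L (le_trans (le_max_left _ _) hL) l hl j hj m hm
    have h2 := hM L (le_trans (le_max_right _ _) hL) l hl j hj m hm
    rw [abs_le] at *
    constructor <;> linarith [h1.1, h1.2, h2.1, h2.2]
  · intro ε hε
    obtain ⟨G, hG, N, hN⟩ := h (ε / 3) (by positivity)
    obtain ⟨δ, hδ, M, hM⟩ := hG.2 (ε / 3) (by positivity)
    refine ⟨δ, hδ, max N M, fun L hL L' hL' l j m l' j' m' hl hj hm _ => ?_⟩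
    have h1 := hN L (le_trans (le_max_left _ _) hL) l hl.1 j hj.1 m hm.1
    have h2 := hN L' (le_trans (le_max_left _ _) hL') l' hl.2.1 j' hj.2.1 m' hm.2.1
    have h3 := hM L (le_trans (le_max_right _ _) hL) L' (le_trans (le_max_right _ _) hL')
      l j m l' j' m' hl hj hm False.elim
    rw [abs_le] at *
    constructor <;> linarith [h1.1, h1.2, h2.1, h2.2, h3.1, h3.2]

/-- Indicator of `j` strictly before `l` in the direction `a`. -/
def ind : Bool → ℕ → ℕ → ℝ
  | false, j, l => if j < l then 1 else 0
  | true, j, l => if l < j then 1 else 0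

theorem ind_swap (a : Bool) (j l : ℕ) : ind a j l = ind (!a) l j := by
  cases a <;> rfl

theorem ind_nonneg (a : Bool) (j l : ℕ) : 0 ≤ ind a j l := by
  cases a <;> simp only [ind] <;> split_ifs <;> norm_num

theorem ind_le (a : Bool) (j l : ℕ) : ind a j l ≤ 1 := by
  cases a <;> simp only [ind] <;> split_ifs <;> norm_num

theorem ind_close {ε : ℝ} (a : Bool) {L L' m l m' l' : ℕ} (hl : Nr (ε / 2) L L' l l')
    (hm : Nr (ε / 2) L L' m m') (h : ε ≤ |(m : ℝ) / L - (l : ℝ) / L|) :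
    ind a m l = ind a m' l' := by
  obtain ⟨h1, h2, h3⟩ := hl
  obtain ⟨g1, g2, g3⟩ := hm
  have hL : (0 : ℝ) < L := by exact_mod_cast (by omega : 0 < L)
  have hL' : (0 : ℝ) < L' := by exact_mod_cast (by omega : 0 < L')
  rw [abs_lt] at h3 g3
  have key : (m < l ∧ m' < l') ∨ (l < m ∧ l' < m') := by
    rcases le_abs.1 h with h | h
    · right
      have e1 : (l : ℝ) / L < m / L := by linarith
      have e2 : (l' : ℝ) / L' < m' / L' := by linarith
      rw [div_lt_div_iff_of_pos_right (by assumption)] at e1 e2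
      exact ⟨by exact_mod_cast e1, by exact_mod_cast e2⟩
    · left
      have e1 : (m : ℝ) / L < l / L := by linarith
      have e2 : (m' : ℝ) / L' < l' / L' := by linarith
      rw [div_lt_div_iff_of_pos_right (by assumption)] at e1 e2
      exact ⟨by exact_mod_cast e1, by exact_mod_cast e2⟩
  rcases key with ⟨k1, k2⟩ | ⟨k1, k2⟩ <;> cases a <;>
    simp [ind, k1, k2, k1.not_gt, k2.not_gt]

theorem NC.ind1 (a : Bool) : NC True (fun _ l _ m => ind a m l) := by
  refine ⟨⟨1, one_pos.le, 0, fun L _ l _ j _ m _ => ?_⟩, fun ε hε => ⟨ε / 2, by positivity, 0, ?_⟩⟩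
  · rw [abs_of_nonneg (ind_nonneg _ _ _)]; exact ind_le _ _ _
  · intro L _ L' _ l j m l' j' m' hl hj hm hs
    beta_reduce
    rw [ind_close a hl hm (hs trivial).1]; simpa using hε.le

theorem NC.ind2 (a : Bool) : NC True (fun _ _ j m => ind a m j) := by
  refine ⟨⟨1, one_pos.le, 0, fun L _ l _ j _ m _ => ?_⟩, fun ε hε => ⟨ε / 2, by positivity, 0, ?_⟩⟩
  · rw [abs_of_nonneg (ind_nonneg _ _ _)]; exact ind_le _ _ _
  · intro L _ L' _ l j m l' j' m' hl hj hm hs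
    beta_reduce
    rw [ind_close a hj hm (hs trivial).2]; simpa using hε.le

theorem sum_div_range (a : ℕ → ℝ) (L L' : ℕ) (hL' : 0 < L') :
    ∑ n ∈ Finset.range (L * L'), a (n / L') = L' * ∑ m ∈ Finset.range L, a m := by
  induction L with
  | zero => simp
  | succ L ih =>
    rw [Nat.succ_mul, Finset.sum_range_add, ih, Finset.sum_range_succ, mul_add]
    congr 1
    rw [Finset.sum_congr rfl (g := fun _ => a L)]
    · simp
    · intro k hk
      rw [Finset.mem_range] at hk
      congr 1
      rw [mul_comm, Nat.mul_add_div hL', Nat.div_eq_of_lt hk, add_zero]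

theorem count_near (L l : ℕ) (η : ℝ) (hη : 0 ≤ η) (hL : 0 < L) :
    ∑ m ∈ Finset.range L, (if |(m : ℝ) / L - (l : ℝ) / L| < η then (1 : ℝ) else 0)
      ≤ 2 * η * L + 1 := by
  have hL0 : (0 : ℝ) < L := by exact_mod_cast hL
  rw [← Finset.sum_filter, Finset.sum_const, nsmul_eq_mul, mul_one]
  have hsub : ((Finset.range L).filter (fun m : ℕ => |(m : ℝ) / L - (l : ℝ) / L| < η)).map
      Nat.castEmbedding ⊆ Finset.Icc ⌈(l : ℝ) - η * L⌉ ⌊(l : ℝ) + η * L⌋ := by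
    intro x hx
    simp only [Finset.mem_map, Finset.mem_filter, Finset.mem_range, Nat.castEmbedding_apply] at hx
    obtain ⟨m, ⟨_, hm⟩, rfl⟩ := hx
    rw [← sub_div, abs_lt, lt_div_iff₀ hL0, div_lt_iff₀ hL0] at hm
    rw [Finset.mem_Icc, Int.ceil_le, Int.le_floor]
    push_cast
    constructor <;> linarith [hm.1, hm.2]
  have hc := Finset.card_le_card hsub
  rw [Finset.card_map, Int.card_Icc] at hc
  have h1 : (⌊(l : ℝ) + η * L⌋ : ℝ) ≤ l + η * L := Int.floor_le _
  have h2 : (l : ℝ) - η * L ≤ ⌈(l : ℝ) - η * L⌉ := Int.le_ceil _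
  have h3 : (((⌊(l : ℝ) + η * L⌋ + 1 - ⌈(l : ℝ) - η * L⌉).toNat : ℤ) : ℝ) ≤ 2 * η * L + 1 := by
    rw [Int.toNat_eq_max]
    push_cast
    apply max_le
    · linarith
    · positivity
  refine le_trans ?_ h3
  exact_mod_cast hc

theorem avg_bound {L : ℕ} {a : ℕ → ℝ} {B : ℝ} (hB : 0 ≤ B) (h : ∀ m < L, |a m| ≤ B) :
    |(1 / (L : ℝ)) * ∑ m ∈ Finset.range L, a m| ≤ B := by
  rcases Nat.eq_zero_or_pos L with rfl | hL
  · simpa using hB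
  have hL0 : (0 : ℝ) < L := by exact_mod_cast hL
  rw [abs_mul, abs_of_nonneg (by positivity)]
  calc (1 / (L : ℝ)) * |∑ m ∈ Finset.range L, a m|
      ≤ (1 / (L : ℝ)) * ∑ m ∈ Finset.range L, B := by
        gcongr
        refine (Finset.abs_sum_le_sum_abs _ _).trans (Finset.sum_le_sum fun m hm => ?_)
        exact h m (Finset.mem_range.1 hm)
    _ = B := by simp; field_simp

theorem grid_close {L L' n N : ℕ} {δ : ℝ} (hn : n < L * L') (hN : 0 < N) (hL : N ≤ L)
    (hL' : N ≤ L') (hδ : 1 / (N : ℝ) < δ) : Nr δ L L' (n / L') (n / L) := by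
  have hL0 : 0 < L := by omega
  have hL0' : 0 < L' := by omega
  refine ⟨Nat.div_lt_of_lt_mul (by rwa [mul_comm] at hn), Nat.div_lt_of_lt_mul hn, ?_⟩
  have rL : (0 : ℝ) < L := by exact_mod_cast hL0
  have rL' : (0 : ℝ) < L' := by exact_mod_cast hL0'
  have rN : (0 : ℝ) < N := by exact_mod_cast hN
  have i1 : 1 / (L : ℝ) ≤ 1 / N := one_div_le_one_div_of_le rN (by exact_mod_cast hL)
  have i2 : 1 / (L' : ℝ) ≤ 1 / N := one_div_le_one_div_of_le rN (by exact_mod_cast hL')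
  have a1 : ((n / L' : ℕ) : ℝ) * L' ≤ n := by exact_mod_cast Nat.div_mul_le_self n L'
  have a2 : (n : ℝ) < ((n / L' : ℕ) + 1) * L' := by
    have := Nat.lt_div_mul_add (a := n) hL0'
    have h : n < (n / L' + 1) * L' := by rw [add_mul, one_mul]; exact this
    exact_mod_cast h
  have b1 : ((n / L : ℕ) : ℝ) * L ≤ n := by exact_mod_cast Nat.div_mul_le_self n L
  have b2 : (n : ℝ) < ((n / L : ℕ) + 1) * L := by
    have := Nat.lt_div_mul_add (a := n) hL0
    have h : n < (n / L + 1) * L := by rw [add_mul, one_mul]; exact this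
    exact_mod_cast h
  have c1 : ((n / L' : ℕ) : ℝ) / L ≤ n / (L * L') := by
    rw [div_le_div_iff₀ rL (by positivity)]; nlinarith
  have c2 : (n : ℝ) / (L * L') < ((n / L' : ℕ) : ℝ) / L + 1 / L := by
    rw [← add_div, div_lt_div_iff₀ (by positivity) rL]; nlinarith
  have d1 : ((n / L : ℕ) : ℝ) / L' ≤ n / (L * L') := by
    rw [div_le_div_iff₀ rL' (by positivity)]; nlinarith
  have d2 : (n : ℝ) / (L * L') < ((n / L : ℕ) : ℝ) / L' + 1 / L' := by
    rw [← add_div, div_lt_div_iff₀ (by positivity) rL']; nlinarith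
  rw [abs_lt]
  constructor <;> linarith

/-- Averaging over the (possibly singular) third variable. -/
theorem NC.avg {F : ℕ → ℕ → ℕ → ℕ → ℝ} (hF : NC True F) :
    NC False (fun L l j _ => (1 / (L : ℝ)) * ∑ m ∈ Finset.range L, F L l j m) := by
  obtain ⟨⟨B, hB, N₀, hN₀⟩, hF2⟩ := hF
  refine ⟨⟨B, hB, N₀, fun L hL l hl j hj _ _ => avg_bound hB fun m hm => hN₀ L hL l hl j hj m hm⟩,
    fun ε hε => ?_⟩
  set η := ε / (1 + 12 * B) with hη
  have hηpos : 0 < η := by positivity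
  have hηeq : η * (1 + 12 * B) = ε := by rw [hη]; field_simp
  obtain ⟨δ, hδ, N₁, hN₁⟩ := hF2 η hηpos
  obtain ⟨N₂, hN₂⟩ := exists_nat_one_div_lt (lt_min hδ hηpos)
  refine ⟨δ, hδ, max (max N₀ N₁) (N₂ + 1), fun L hL L' hL' l j _ l' j' _ hl hj _ _ => ?_⟩
  simp only [ge_iff_le, max_le_iff] at hL hL'
  have hL0 : 0 < L := by omega
  have hL0' : 0 < L' := by omega
  have rL : (0 : ℝ) < L := by exact_mod_cast hL0
  have rL' : (0 : ℝ) < L' := by exact_mod_cast hL0'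
  have hN₂δ : 1 / ((N₂ + 1 : ℕ) : ℝ) < δ := by push_cast; exact hN₂.trans_le (min_le_left _ _)
  have hN₂η : 1 / ((N₂ + 1 : ℕ) : ℝ) < η := by push_cast; exact hN₂.trans_le (min_le_right _ _)
  have hLη : 1 / (L : ℝ) ≤ η :=
    (one_div_le_one_div_of_le (by positivity) (by exact_mod_cast hL.2)).trans hN₂η.le
  have e1 : (1 / (L : ℝ)) * ∑ m ∈ Finset.range L, F L l j m =
      (1 / ((L : ℝ) * L')) * ∑ n ∈ Finset.range (L * L'), F L l j (n / L') := by
    rw [sum_div_range (fun m => F L l j m) L L' hL0']; field_simp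
  have e2 : (1 / (L' : ℝ)) * ∑ m ∈ Finset.range L', F L' l' j' m =
      (1 / ((L : ℝ) * L')) * ∑ n ∈ Finset.range (L * L'), F L' l' j' (n / L) := by
    rw [mul_comm L L', sum_div_range (fun m => F L' l' j' m) L' L hL0]; field_simp
  beta_reduce
  rw [e1, e2, ← mul_sub, ← Finset.sum_sub_distrib, abs_mul, abs_of_nonneg (by positivity)]
  let bad : ℕ → ℕ → ℝ := fun k m => if |(m : ℝ) / L - (k : ℝ) / L| < η then (1 : ℝ) else 0
  have hbad0 : ∀ k m, 0 ≤ bad k m := fun k m => by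
    simp only [bad]; split_ifs <;> norm_num
  have hpt : ∀ n ∈ Finset.range (L * L'), |F L l j (n / L') - F L' l' j' (n / L)| ≤
      η + 2 * B * bad l (n / L') + 2 * B * bad j (n / L') := by
    intro n hn
    rw [Finset.mem_range] at hn
    have hc := grid_close hn (Nat.succ_pos N₂) hL.2 hL'.2 hN₂δ
    have hb1 := hN₀ L hL.1.1 l hl.1 j hj.1 _ hc.1
    have hb2 := hN₀ L' hL'.1.1 l' hl.2.1 j' hj.2.1 _ hc.2.1
    have hb : |F L l j (n / L') - F L' l' j' (n / L)| ≤ 2 * B := by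
      rw [abs_le] at *; constructor <;> linarith [hb1.1, hb1.2, hb2.1, hb2.2]
    have p1 := mul_nonneg (mul_nonneg zero_le_two hB) (hbad0 l (n / L'))
    have p2 := mul_nonneg (mul_nonneg zero_le_two hB) (hbad0 j (n / L'))
    by_cases h1 : |((n / L' : ℕ) : ℝ) / L - (l : ℝ) / L| < η
    · have : bad l (n / L') = 1 := if_pos h1
      rw [this]; linarith
    by_cases h2 : |((n / L' : ℕ) : ℝ) / L - (j : ℝ) / L| < η
    · have : bad j (n / L') = 1 := if_pos h2
      rw [this]; linarith
    have := hN₁ L hL.1.2 L' hL'.1.2 l j _ l' j' _ hl hj hc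
      (fun _ => ⟨not_lt.1 h1, not_lt.1 h2⟩)
    linarith
  have hsum : ∑ n ∈ Finset.range (L * L'), (η + 2 * B * bad l (n / L') + 2 * B * bad j (n / L'))
      ≤ L * L' * η + 2 * B * (L' * (2 * η * L + 1)) + 2 * B * (L' * (2 * η * L + 1)) := by
    rw [Finset.sum_add_distrib, Finset.sum_add_distrib, ← Finset.mul_sum, ← Finset.mul_sum,
      sum_div_range (bad l) L L' hL0', sum_div_range (bad j) L L' hL0', Finset.sum_const,
      Finset.card_range, nsmul_eq_mul]
    push_cast
    have c1 := count_near L l η hηpos.le hL0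
    have c2 := count_near L j η hηpos.le hL0
    gcongr
  calc (1 / ((L : ℝ) * L')) *
        |∑ n ∈ Finset.range (L * L'), (F L l j (n / L') - F L' l' j' (n / L))|
      ≤ (1 / ((L : ℝ) * L')) * (L * L' * η + 2 * B * (L' * (2 * η * L + 1))
          + 2 * B * (L' * (2 * η * L + 1))) := by
        gcongr
        exact (Finset.abs_sum_le_sum_abs _ _).trans ((Finset.sum_le_sum hpt).trans hsum)
    _ = η + 4 * B * (2 * η + 1 / L) := by field_simp; ring
    _ ≤ η + 4 * B * (2 * η + η) := by gcongr
    _ = ε := by rw [← hηeq]; ring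

/-- The last entry of a convergent family is a Cauchy sequence. -/
theorem NC.cauchy_last {F : ℕ → ℕ → ℝ} (hF : NC False (fun L l _ _ => F L l)) :
    CauchySeq (fun L => F L (L - 1)) := by
  rw [Metric.cauchySeq_iff]
  intro ε hε
  obtain ⟨δ, hδ, N, hN⟩ := hF.2 (ε / 2) (by positivity)
  obtain ⟨N₂, hN₂⟩ := exists_nat_one_div_lt hδ
  refine ⟨max N (N₂ + 1), fun L hL L' hL' => ?_⟩
  simp only [ge_iff_le, max_le_iff] at hL hL'
  have hnr : Nr δ L L' (L - 1) (L' - 1) := by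
    have hL0 : 0 < L := by omega
    have hL0' : 0 < L' := by omega
    have rL : (0 : ℝ) < L := by exact_mod_cast hL0
    have rL' : (0 : ℝ) < L' := by exact_mod_cast hL0'
    refine ⟨by omega, by omega, ?_⟩
    rw [Nat.cast_pred hL0, Nat.cast_pred hL0', sub_div, sub_div, div_self rL.ne', div_self rL'.ne']
    have i1 : 1 / (L : ℝ) ≤ 1 / (N₂ + 1) :=
      one_div_le_one_div_of_le (by positivity) (by exact_mod_cast hL.2)
    have i2 : 1 / (L' : ℝ) ≤ 1 / (N₂ + 1) :=
      one_div_le_one_div_of_le (by positivity) (by exact_mod_cast hL'.2)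
    have i3 : 0 < 1 / (L : ℝ) := by positivity
    have i4 : 0 < 1 / (L' : ℝ) := by positivity
    rw [abs_lt]; constructor <;> linarith
  have := hN L hL.1 L' hL'.1 _ _ _ _ _ _ hnr hnr hnr False.elim
  rw [Real.dist_eq]; linarith

theorem NC.of_tendsto {f : ℕ → ℝ} {x : ℝ} (hf : Tendsto f atTop (𝓝 x)) :
    NC False (fun L _ _ _ => f L) := by
  refine NC.of_approx fun ε hε => ⟨fun _ _ _ _ => x, NC.const _ x, ?_⟩
  obtain ⟨N, hN⟩ := Metric.tendsto_atTop.1 hf ε hε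
  exact ⟨N, fun L hL l _ j _ m _ => by simpa [Real.dist_eq] using (hN L hL).le⟩

/-! ### Discrete Volterra equations -/

/-- Position of `l` along the direction `a`. -/
def pos (a : Bool) (L l : ℕ) : ℕ := if a then L - 1 - l else l

theorem weight_fwd (lam : ℝ) (hlam : 0 < lam) (L : ℕ) (hL : 0 < L) (l : ℕ) :
    (1 / (L : ℝ)) * ∑ j ∈ Finset.range l, Real.exp (lam * (j / L)) ≤
      Real.exp (lam * (l / L)) / lam := by
  have rL : (0 : ℝ) < L := by exact_mod_cast hL
  induction l with
  | zero => simp; positivity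
  | succ l ih =>
    rw [Finset.sum_range_succ, mul_add]
    have e : Real.exp (lam * ((l + 1 : ℕ) / L)) = Real.exp (lam * (l / L)) * Real.exp (lam / L) := by
      rw [← Real.exp_add]; congr 1; push_cast; field_simp
    rw [e]
    have h1 : lam / L + 1 ≤ Real.exp (lam / L) := Real.add_one_le_exp _
    have h2 : 0 < Real.exp (lam * (l / L)) := Real.exp_pos _
    calc _ ≤ Real.exp (lam * (l / L)) / lam + 1 / L * Real.exp (lam * (l / L)) := by gcongr
      _ = Real.exp (lam * (l / L)) * (lam / L + 1) / lam := by field_simp; ring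
      _ ≤ _ := by gcongr

theorem weight (a : Bool) (lam : ℝ) (hlam : 0 < lam) (L l : ℕ) (hl : l < L) :
    (1 / (L : ℝ)) * ∑ j ∈ Finset.range L, ind a j l * Real.exp (lam * ((pos a L j : ℕ) / L)) ≤
      Real.exp (lam * ((pos a L l : ℕ) / L)) / lam := by
  have key : ∀ k < L, ∑ j ∈ Finset.range L, ind false j k * Real.exp (lam * (j / L)) =
      ∑ j ∈ Finset.range k, Real.exp (lam * (j / L)) := by
    intro k hk
    simp only [ind, ite_mul, one_mul, zero_mul]
    rw [← Finset.sum_filter]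
    apply Finset.sum_congr _ (fun _ _ => rfl)
    ext j
    simp only [Finset.mem_filter, Finset.mem_range]
    omega
  cases a with
  | false =>
    simp only [pos, Bool.false_eq_true, if_false]
    rw [key l hl]
    exact weight_fwd lam hlam L (by omega) l
  | true =>
    simp only [pos, if_true]
    rw [← Finset.sum_range_reflect]
    have : ∑ j ∈ Finset.range L, ind true (L - 1 - j) l *
        Real.exp (lam * (((L - 1 - (L - 1 - j) : ℕ) : ℝ) / L)) =
        ∑ j ∈ Finset.range L, ind false j (L - 1 - l) * Real.exp (lam * (j / L)) := by
      apply Finset.sum_congr rfl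
      intro j hj
      rw [Finset.mem_range] at hj
      have h1 : L - 1 - (L - 1 - j) = j := by omega
      rw [h1]
      congr 1
      simp only [ind]
      congr 1
      simp only [eq_iff_iff]
      omega
    rw [this, key _ (by omega)]
    exact weight_fwd lam hlam L (by omega) _

/-- Causal distance between two tuples of arrays. -/
noncomputable def Ed {ι : Type} (a : Bool) (S : Finset ι) (y z : ι → ℕ → ℕ → ℝ) (L l : ℕ) : ℝ :=
  (1 / (L : ℝ)) * ∑ j ∈ Finset.range L, ind a j l * ∑ i ∈ S, |y i L j - z i L j|

theorem Ed_nonneg {ι : Type} (a : Bool) (S : Finset ι) (y z : ι → ℕ → ℕ → ℝ) (L l : ℕ) :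
    0 ≤ Ed a S y z L l :=
  mul_nonneg (by positivity) (Finset.sum_nonneg fun j _ => mul_nonneg (ind_nonneg _ _ _)
    (Finset.sum_nonneg fun i _ => abs_nonneg _))

/-- Causal Lipschitz operators. -/
def Lp {ι : Type} (a : Bool) (S : Finset ι) (Φ : (ι → ℕ → ℕ → ℝ) → ℕ → ℕ → ℕ → ℝ) : Prop :=
  ∃ M : ℝ, 0 ≤ M ∧ ∃ N : ℕ, ∀ L ≥ N, ∀ y z, ∀ l < L, ∀ m < L,
    |Φ y L l m - Φ z L l m| ≤ M * Ed a S y z L l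

section LpLemmas
variable {ι : Type} {a : Bool} {S : Finset ι}

theorem Lp.const (g : ℕ → ℕ → ℕ → ℝ) : Lp a S (fun _ L l m => g L l m) :=
  ⟨0, le_rfl, 0, by intros; simp⟩

theorem Lp.add {Φ Ψ : (ι → ℕ → ℕ → ℝ) → ℕ → ℕ → ℕ → ℝ} (hΦ : Lp a S Φ) (hΨ : Lp a S Ψ) :
    Lp a S (fun y L l m => Φ y L l m + Ψ y L l m) := by
  obtain ⟨M, hM, N, h⟩ := hΦ
  obtain ⟨M', hM', N', h'⟩ := hΨ
  refine ⟨M + M', by positivity, max N N', fun L hL y z l hl m hm => ?_⟩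
  have h1 := h L (le_trans (le_max_left _ _) hL) y z l hl m hm
  have h2 := h' L (le_trans (le_max_right _ _) hL) y z l hl m hm
  beta_reduce
  rw [abs_le] at *
  constructor <;> linarith [h1.1, h1.2, h2.1, h2.2]

theorem Lp.sub {Φ Ψ : (ι → ℕ → ℕ → ℝ) → ℕ → ℕ → ℕ → ℝ} (hΦ : Lp a S Φ) (hΨ : Lp a S Ψ) :
    Lp a S (fun y L l m => Φ y L l m - Ψ y L l m) := by
  obtain ⟨M, hM, N, h⟩ := hΦ
  obtain ⟨M', hM', N', h'⟩ := hΨ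
  refine ⟨M + M', by positivity, max N N', fun L hL y z l hl m hm => ?_⟩
  have h1 := h L (le_trans (le_max_left _ _) hL) y z l hl m hm
  have h2 := h' L (le_trans (le_max_right _ _) hL) y z l hl m hm
  beta_reduce
  rw [abs_le] at *
  constructor <;> linarith [h1.1, h1.2, h2.1, h2.2]

theorem Lp.sum {κ : Type} (A : Finset κ) {Φ : κ → (ι → ℕ → ℕ → ℝ) → ℕ → ℕ → ℕ → ℝ}
    (hΦ : ∀ k ∈ A, Lp a S (Φ k)) : Lp a S (fun y L l m => ∑ k ∈ A, Φ k y L l m) := by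
  classical
  induction A using Finset.induction_on with
  | empty => simpa using Lp.const (fun _ _ _ => 0)
  | insert x A hx ih =>
    simp only [Finset.sum_insert hx]
    exact (hΦ x (Finset.mem_insert_self _ _)).add
      (ih fun i hi => hΦ i (Finset.mem_insert_of_mem hi))

theorem Lp.mul {Φ : (ι → ℕ → ℕ → ℝ) → ℕ → ℕ → ℕ → ℝ} (hΦ : Lp a S Φ) {g : ℕ → ℕ → ℕ → ℝ}
    (hg : Bd (fun L l _ m => g L l m)) : Lp a S (fun y L l m => Φ y L l m * g L l m) := by
  obtain ⟨M, hM, N, h⟩ := hΦ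
  obtain ⟨B, hB, N', h'⟩ := hg
  refine ⟨M * B, by positivity, max N N', fun L hL y z l hl m hm => ?_⟩
  have h1 := h L (le_trans (le_max_left _ _) hL) y z l hl m hm
  have h2 := h' L (le_trans (le_max_right _ _) hL) l hl l hl m hm
  beta_reduce
  rw [← sub_mul, abs_mul, mul_right_comm]
  exact mul_le_mul h1 h2 (abs_nonneg _) (mul_nonneg hM (Ed_nonneg _ _ _ _ _ _))

theorem Lp.avg {Φ : (ι → ℕ → ℕ → ℝ) → ℕ → ℕ → ℕ → ℝ} (hΦ : Lp a S Φ) :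
    Lp a S (fun y L l _ => (1 / (L : ℝ)) * ∑ m ∈ Finset.range L, Φ y L l m) := by
  obtain ⟨M, hM, N, h⟩ := hΦ
  refine ⟨M, hM, N, fun L hL y z l hl m hm => ?_⟩
  beta_reduce
  rw [← mul_sub, ← Finset.sum_sub_distrib]
  exact avg_bound (mul_nonneg hM (Ed_nonneg _ _ _ _ _ _)) fun m hm => h L hL y z l hl m hm

theorem Lp.diag {Φ : (ι → ℕ → ℕ → ℝ) → ℕ → ℕ → ℕ → ℝ} (hΦ : Lp a S Φ) :
    Lp a S (fun y L l _ => Φ y L l l) := by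
  obtain ⟨M, hM, N, h⟩ := hΦ
  exact ⟨M, hM, N, fun L hL y z l hl m hm => h L hL y z l hl l hl⟩

theorem Lp.base {i : ι} (hi : i ∈ S) {g : ℕ → ℕ → ℕ → ℕ → ℝ} (hg : Bd g) :
    Lp a S (fun y L l m =>
      (1 / (L : ℝ)) * ∑ j ∈ Finset.range L, ind a j l * (g L l m j * y i L j)) := by
  obtain ⟨B, hB, N, h⟩ := hg
  refine ⟨B, hB, N, fun L hL y z l hl m hm => ?_⟩
  beta_reduce
  rw [← mul_sub, ← Finset.sum_sub_distrib, abs_mul, abs_of_nonneg (by positivity), Ed,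
    mul_left_comm, Finset.mul_sum]
  gcongr
  refine (Finset.abs_sum_le_sum_abs _ _).trans (Finset.sum_le_sum fun j hj => ?_)
  rw [Finset.mem_range] at hj
  have e : ind a j l * (g L l m j * y i L j) - ind a j l * (g L l m j * z i L j) =
    ind a j l * (g L l m j * (y i L j - z i L j)) := by ring
  rw [e, abs_mul, abs_mul, abs_of_nonneg (ind_nonneg _ _ _), mul_left_comm B]
  have h1 := h L hL l hl m hm j hj
  have h2 : |y i L j - z i L j| ≤ ∑ i ∈ S, |y i L j - z i L j| :=
    Finset.single_le_sum (f := fun i => |y i L j - z i L j|) (fun _ _ => abs_nonneg _) hi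
  have h3 := ind_nonneg a j l
  gcongr

end LpLemmas

theorem contr {a : Bool} {M : ℝ} (hM : 0 < M) {L : ℕ} {d e : ℕ → ℝ} {K : ℝ} (hK : 0 ≤ K)
    (hd : ∀ j < L, d j ≤ K * Real.exp (2 * M * ((pos a L j : ℕ) / L)))
    (he : ∀ l < L, e l ≤ M * ((1 / (L : ℝ)) * ∑ j ∈ Finset.range L, ind a j l * d j)) :
    ∀ l < L, e l ≤ K / 2 * Real.exp (2 * M * ((pos a L l : ℕ) / L)) := by
  intro l hl
  have hw := weight a (2 * M) (by positivity) L l hl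
  calc e l ≤ _ := he l hl
    _ ≤ M * ((1 / (L : ℝ)) * ∑ j ∈ Finset.range L,
          ind a j l * (K * Real.exp (2 * M * ((pos a L j : ℕ) / L)))) := by
        gcongr with j hj
        · exact ind_nonneg _ _ _
        · exact hd j (Finset.mem_range.1 hj)
    _ = M * K * ((1 / (L : ℝ)) * ∑ j ∈ Finset.range L,
          ind a j l * Real.exp (2 * M * ((pos a L j : ℕ) / L))) := by
        rw [Finset.mul_sum, Finset.mul_sum, Finset.mul_sum, Finset.mul_sum]
        refine Finset.sum_congr rfl fun j _ => by ring
    _ ≤ M * K * (Real.exp (2 * M * ((pos a L l : ℕ) / L)) / (2 * M)) := by gcongr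
    _ = _ := by field_simp

theorem volterra {ι : Type} (a : Bool) (S : Finset ι) (x : ι → ℕ → ℕ → ℝ)
    (Op : (ι → ℕ → ℕ → ℝ) → ι → ℕ → ℕ → ℝ)
    (hfix : ∀ L l, l < L → ∀ i ∈ S, Op x i L l = x i L l)
    (hN : ∀ y, (∀ i ∈ S, NC False (fun L l _ _ => y i L l)) →
      ∀ i ∈ S, NC False (fun L l _ _ => Op y i L l))
    (hLip : ∀ i ∈ S, Lp a S (fun y L l _ => Op y i L l)) :
    ∀ i ∈ S, NC False (fun L l _ _ => x i L l) := by
  classical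
  -- the total Lipschitz constant
  have hL2 : ∃ M : ℝ, 0 < M ∧ ∃ N : ℕ, ∀ L ≥ N, ∀ y z, ∀ l < L,
      ∑ i ∈ S, |Op y i L l - Op z i L l| ≤ M * Ed a S y z L l := by
    choose! M hM N hN using hLip
    refine ⟨∑ i ∈ S, M i + 1, ?_, S.sup N, fun L hL y z l hl => ?_⟩
    · have := Finset.sum_nonneg hM; positivity
    · have hE := Ed_nonneg a S y z L l
      calc _ ≤ ∑ i ∈ S, M i * Ed a S y z L l :=
            Finset.sum_le_sum fun i hi => hN i hi L ((Finset.le_sup hi).trans hL) y z l hl l hl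
        _ ≤ _ := by rw [← Finset.sum_mul]; nlinarith
  obtain ⟨M, hM, N, hMN⟩ := hL2
  let Y : ℕ → ι → ℕ → ℕ → ℝ := fun n => (Op^[n]) (fun _ _ _ => 0)
  have hYs : ∀ n, Y (n + 1) = Op (Y n) := fun n => Function.iterate_succ_apply' _ _ _
  have hY : ∀ n, ∀ i ∈ S, NC False (fun L l _ _ => Y n i L l) := by
    intro n
    induction n with
    | zero => exact fun i _ => NC.const _ 0
    | succ n ih => rw [hYs]; exact hN _ ih
  -- uniform bound for `Op 0`
  obtain ⟨B, hB, N₁, hBN⟩ : ∃ B : ℝ, 0 ≤ B ∧ ∃ N : ℕ, ∀ L ≥ N, ∀ l < L,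
      ∑ i ∈ S, |Y 1 i L l| ≤ B := by
    have : ∀ i ∈ S, ∃ B : ℝ, 0 ≤ B ∧ ∃ N : ℕ, ∀ L ≥ N, ∀ l < L, ∀ j < L, ∀ m < L,
      |Y 1 i L l| ≤ B := fun i hi => (hY 1 i hi).1
    choose! B hB N hN using this
    exact ⟨∑ i ∈ S, B i, Finset.sum_nonneg hB, S.sup N, fun L hL l hl =>
      Finset.sum_le_sum fun i hi => hN i hi L ((Finset.le_sup hi).trans hL) l hl l hl l hl⟩
  let d : ℕ → ℕ → ℕ → ℝ := fun n L l => ∑ i ∈ S, |Y n i L l - x i L l|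
  have hd0 : ∀ n L l, 0 ≤ d n L l := fun n L l => Finset.sum_nonneg fun _ _ => abs_nonneg _
  have hdstep : ∀ n, ∀ L ≥ N, ∀ l < L, d (n + 1) L l ≤
      M * ((1 / (L : ℝ)) * ∑ j ∈ Finset.range L, ind a j l * d n L j) := by
    intro n L hL l hl
    have := hMN L hL (Y n) x l hl
    refine le_trans (le_of_eq ?_) this
    simp only [d, hYs]
    exact Finset.sum_congr rfl fun i hi => by rw [hfix L l hl i hi]
  have hd1 : ∀ L ≥ N₁, ∀ l < L, d 0 L l ≤ B + d 1 L l := by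
    intro L hL l hl
    refine le_trans ?_ (add_le_add (hBN L hL l hl) le_rfl)
    simp only [d, ← Finset.sum_add_distrib]
    refine Finset.sum_le_sum fun i _ => ?_
    have h0 : Y 0 i L l = 0 := rfl
    rw [h0, zero_sub, abs_neg]
    calc |x i L l| = |Y 1 i L l - (Y 1 i L l - x i L l)| := by congr 1; ring
      _ ≤ _ := abs_sub _ _
  let w : ℕ → ℕ → ℝ := fun L l => Real.exp (2 * M * ((pos a L l : ℕ) / L))
  have hw1 : ∀ L l, 1 ≤ w L l := fun L l => Real.one_le_exp (by positivity)
  have hw2 : ∀ L l, l < L → w L l ≤ Real.exp (2 * M) := by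
    intro L l hl
    apply Real.exp_le_exp.2
    have : ((pos a L l : ℕ) : ℝ) / L ≤ 1 := by
      apply div_le_one_of_le₀ _ (by positivity)
      have : pos a L l ≤ L := by unfold pos; split_ifs <;> omega
      exact_mod_cast this
    nlinarith
  -- a priori bound
  have hap : ∀ L ≥ max N N₁, ∀ l < L, d 0 L l ≤ 2 * B * w L l := by
    intro L hL
    simp only [ge_iff_le, max_le_iff] at hL
    intro l hl
    obtain ⟨l₀, hl₀, hmax⟩ := Finset.exists_max_image (Finset.range L)
      (fun l => d 0 L l / w L l) ⟨l, Finset.mem_range.2 hl⟩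
    rw [Finset.mem_range] at hl₀
    set D := d 0 L l₀ / w L l₀ with hD
    have wpos : ∀ l, 0 < w L l := fun l => lt_of_lt_of_le one_pos (hw1 L l)
    have hDn : 0 ≤ D := div_nonneg (hd0 _ _ _) (wpos _).le
    have hle : ∀ j < L, d 0 L j ≤ D * w L j := fun j hj =>
      (div_le_iff₀ (wpos j)).1 (hmax j (Finset.mem_range.2 hj))
    have h1 := contr hM hDn hle (fun l hl => hdstep 0 L hL.1 l hl) l₀ hl₀
    have h2 := hd1 L hL.2 l₀ hl₀
    have h3 : d 0 L l₀ = D * w L l₀ := by rw [hD, div_mul_cancel₀ _ (wpos _).ne']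
    have h4 : D * w L l₀ ≤ B * w L l₀ + D / 2 * w L l₀ := by
      rw [← h3]
      have := mul_le_mul_of_nonneg_left (hw1 L l₀) hB
      refine h2.trans (add_le_add (by linarith) h1)
    have h5 : D ≤ 2 * B := by
      have := wpos l₀
      have : D ≤ B + D / 2 := by
        by_contra hcon
        push Not at hcon
        nlinarith
      linarith
    exact (hle l hl).trans (mul_le_mul_of_nonneg_right h5 (wpos l).le)
  have hall : ∀ n, ∀ L ≥ max N N₁, ∀ l < L, d n L l ≤ (2 * B / 2 ^ n) * w L l := by
    intro n
    induction n with
    | zero => intro L hL l hl; simpa using hap L hL l hl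
    | succ n ih =>
      intro L hL l hl
      have := contr hM (by positivity) (ih L hL)
        (fun l hl => hdstep n L (le_trans (le_max_left _ _) hL) l hl) l hl
      rwa [div_div, ← pow_succ] at this
  intro i hi
  refine NC.of_approx fun ε hε => ?_
  obtain ⟨n, hn⟩ : ∃ n : ℕ, 2 * B * Real.exp (2 * M) / 2 ^ n < ε := by
    have : Tendsto (fun n : ℕ => 2 * B * Real.exp (2 * M) / 2 ^ n) atTop (𝓝 0) := by
      have h := (tendsto_pow_atTop_nhds_zero_of_lt_one (r := (1 / 2 : ℝ)) (by norm_num)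
        (by norm_num)).const_mul (2 * B * Real.exp (2 * M))
      simpa [div_eq_mul_inv] using h
    exact (this.eventually (gt_mem_nhds hε)).exists
  refine ⟨_, hY n i hi, max N N₁, fun L hL l hl j _ m _ => ?_⟩
  have h1 := hall n L hL l hl
  have h2 : |Y n i L l - x i L l| ≤ d n L l :=
    Finset.single_le_sum (f := fun i => |Y n i L l - x i L l|) (fun _ _ => abs_nonneg _) hi
  have h3 : (2 * B / 2 ^ n) * w L l ≤ (2 * B / 2 ^ n) * Real.exp (2 * M) := by
    have := hw2 L l hl
    gcongr
  have h4 : (2 * B / 2 ^ n) * Real.exp (2 * M) = 2 * B * Real.exp (2 * M) / 2 ^ n := by ring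
  rw [abs_sub_comm]
  linarith

/-! ### The discrete system -/

/-- The recursion in closed discrete form; the two directions are treated uniformly. -/
structure Sys (T : ℕ) (G : Bool → ℕ → ℤ → Bool → ℕ → ℕ → ℕ → ℝ)
    (c : ℤ → ℤ → Bool → ℕ → ℕ → ℝ) (z : Bool → ℕ → ℕ → ℝ) : Prop where
  symm : ∀ t s a L l, l < L → c t s a L l = c s t a L l
  base : ∀ a L l, l < L → c (-1) (-1) a L l = 1
  mixed : ∀ t : ℤ, 0 ≤ t → ∀ a L l, l < L → c t (-1) a L l = 0
  vanish : ∀ (t : ℕ) (r : ℤ), (t : ℤ) < r → ∀ a b L l m, l < L → G a t r b L l m = 0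
  E1 : ∀ a (t : ℕ), t < T → ∀ r : ℤ, -1 ≤ r → r ≤ t → ∀ b L l m, l < L → m < L →
    G a t r b L l m = (if r = -1 ∧ b = a then z a t L else 0)
      + (if (t : ℤ) = r ∧ b = a then ind a m l else 0)
      + (1 / (L : ℝ)) * ∑ j ∈ Finset.range L, ind a j l *
          ∑ s ∈ Finset.range t, G (!a) s r b L j m * (G a t s (!a) L j j - c t s a L j)
  E2 : ∀ a (t : ℕ), t < T → ∀ s : ℕ, s ≤ t → ∀ L l, l < L →
    c t s a L l = ∑ t' ∈ Finset.Icc (-1 : ℤ) t, ∑ s' ∈ Finset.Icc (-1 : ℤ) s, ∑ b : Bool,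
      (1 / (L : ℝ)) * ∑ m ∈ Finset.range L,
        G a t t' b L l m * c t' s' b L m * G a s s' b L l m

section SysLemmas
variable {T : ℕ} {G : Bool → ℕ → ℤ → Bool → ℕ → ℕ → ℕ → ℝ}
    {c : ℤ → ℤ → Bool → ℕ → ℕ → ℝ} {z : Bool → ℕ → ℕ → ℝ}

/-- Convergence of all `Γ_{t,r,a,·}` with `r < t`. -/
def GoodG (G : Bool → ℕ → ℤ → Bool → ℕ → ℕ → ℕ → ℝ) (a : Bool) (t : ℕ) : Prop :=
  ∀ r : ℤ, -1 ≤ r → r < t → ∀ b, NC False (fun L l j _ => G a t r b L l j)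

/-- Convergence of all `C_{t,s,a}` with `s ≤ t`. -/
def GoodC (c : ℤ → ℤ → Bool → ℕ → ℕ → ℝ) (a : Bool) (t : ℕ) : Prop :=
  ∀ s : ℕ, s ≤ t → NC False (fun L l _ _ => c t s a L l)

theorem Sys.Gtt (h : Sys T G c z) (a : Bool) {t : ℕ} (ht : t < T) (b : Bool) {L l m : ℕ}
    (hl : l < L) (hm : m < L) : G a t t b L l m = if b = a then ind a m l else 0 := by
  rw [h.E1 a t ht t (by omega) le_rfl b L l m hl hm]
  have h1 : ¬ ((t : ℤ) = -1 ∧ b = a) := by omega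
  have h2 : ∀ j ∈ Finset.range L, ind a j l *
      ∑ s ∈ Finset.range t, G (!a) s t b L j m * (G a t s (!a) L j j - c t s a L j) = 0 := by
    intro j hj
    rw [Finset.sum_eq_zero, mul_zero]
    intro s hs
    rw [h.vanish s t (by exact_mod_cast Finset.mem_range.1 hs) _ _ _ _ _ (Finset.mem_range.1 hj),
      zero_mul]
  rw [if_neg h1, Finset.sum_eq_zero h2]
  simp

theorem Sys.J1 (h : Sys T G c z) {a : Bool} {t : ℕ} (ht : t < T) (hg : GoodG G a t) {r : ℤ}
    (hr : -1 ≤ r) (b : Bool) : NC True (fun L l _ m => G a t r b L l m) := by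
  rcases lt_trichotomy r t with h1 | h1 | h1
  · exact (hg r hr h1 b).app Pj1 Pj3 Pj3
  · subst h1
    by_cases hb : b = a
    · exact (NC.ind1 a).congr fun L l j m hl _ hm => by rw [h.Gtt a ht b hl hm, if_pos hb]
    · exact (NC.const _ 0).congr fun L l j m hl _ hm => by rw [h.Gtt a ht b hl hm, if_neg hb]
  · exact (NC.const _ 0).congr fun L l j m hl _ hm => by rw [h.vanish t r h1 _ _ _ _ _ hl]

theorem Sys.J2 (h : Sys T G c z) {a : Bool} {t : ℕ} (ht : t < T) (hg : GoodG G a t) {r : ℤ}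
    (hr : -1 ≤ r) (b : Bool) : NC True (fun L _ j m => G a t r b L m j) := by
  rcases lt_trichotomy r t with h1 | h1 | h1
  · exact (hg r hr h1 b).app Pj3 Pj2 Pj3
  · subst h1
    by_cases hb : b = a
    · exact (NC.ind2 (!a)).congr fun L l j m _ hj hm => by
        rw [h.Gtt a ht b hm hj, if_pos hb, ind_swap a]
    · exact (NC.const _ 0).congr fun L l j m _ hj hm => by rw [h.Gtt a ht b hm hj, if_neg hb]
  · exact (NC.const _ 0).congr fun L l j m _ hj hm => by rw [h.vanish t r h1 _ _ _ _ _ hm]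

theorem Sys.cNC (h : Sys T G c z) {a : Bool} {t : ℕ} (hg : ∀ s < t, GoodC c a s) {t' s' : ℤ}
    (h1 : -1 ≤ t') (h2 : t' < t) (h3 : -1 ≤ s') (h4 : s' < t) :
    NC False (fun L l _ _ => c t' s' a L l) := by
  rcases h1.eq_or_lt with rfl | h1
  · rcases h3.eq_or_lt with rfl | h3
    · exact (NC.const _ 1).congr fun L l j m hl _ _ => by rw [h.base _ _ _ hl]
    · exact (NC.const _ 0).congr fun L l j m hl _ _ => by
        rw [h.symm _ _ _ _ _ hl, h.mixed _ (by omega) _ _ _ hl]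
  · rcases h3.eq_or_lt with rfl | h3
    · exact (NC.const _ 0).congr fun L l j m hl _ _ => by rw [h.mixed _ (by omega) _ _ _ hl]
    · lift t' to ℕ using (by omega)
      lift s' to ℕ using (by omega)
      rcases le_total s' t' with hle | hle
      · exact hg t' (by omega) s' hle
      · exact (hg s' (by omega) t' hle).congr fun L l j m hl _ _ => by
          rw [h.symm _ _ _ _ _ hl]

/-- `Γ_{t,r,a,b}` expressed through the unknowns. -/
noncomputable def Ghat (G : Bool → ℕ → ℤ → Bool → ℕ → ℕ → ℕ → ℝ) (z : Bool → ℕ → ℕ → ℝ)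
    (a : Bool) (t : ℕ) (r : ℤ) (b : Bool) (y : ℕ × Bool → ℕ → ℕ → ℝ) (L l m : ℕ) : ℝ :=
  if r = t then G a t t b L l m else
    (if r = -1 ∧ b = a then z a t L else 0) + ∑ s ∈ Finset.range t,
      (1 / (L : ℝ)) * ∑ j ∈ Finset.range L, ind a j l * (G (!a) s r b L j m * y (s, false) L j)

/-- `C_{t',s',b}` expressed through the unknowns. -/
noncomputable def chat (c : ℤ → ℤ → Bool → ℕ → ℕ → ℝ) (t : ℕ) (t' s' : ℤ) (b : Bool)
    (y : ℕ × Bool → ℕ → ℕ → ℝ) (L m : ℕ) : ℝ :=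
  if t' = t then (if s' = -1 then 0 else y (s'.toNat, true) L m) else c t' s' b L m

/-- New value of `C_{t,s,a}`. -/
noncomputable def cnew (G : Bool → ℕ → ℤ → Bool → ℕ → ℕ → ℕ → ℝ)
    (c : ℤ → ℤ → Bool → ℕ → ℕ → ℝ) (z : Bool → ℕ → ℕ → ℝ)
    (a : Bool) (t s : ℕ) (y : ℕ × Bool → ℕ → ℕ → ℝ) (L l : ℕ) : ℝ :=
  ∑ t' ∈ Finset.Icc (-1 : ℤ) t, ∑ s' ∈ Finset.Icc (-1 : ℤ) s, ∑ b : Bool,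
      (1 / (L : ℝ)) * ∑ m ∈ Finset.range L,
        Ghat G z a t t' b y L l m * chat c t t' s' b y L m * G a s s' b L l m

theorem Ghat_NC (h : Sys T G c z) {a : Bool} {t : ℕ} (ht : t < T)
    (hG : ∀ s < t, ∀ a, GoodG G a s) (hz : NC False (fun L _ _ _ => z a t L))
    {r : ℤ} (hr : -1 ≤ r) (hrt : r < t) (b : Bool) {y : ℕ × Bool → ℕ → ℕ → ℝ}
    (hy : ∀ s < t, NC False (fun L l _ _ => y (s, false) L l)) :
    NC False (fun L l j _ => Ghat G z a t r b y L l j) := by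
  unfold Ghat
  simp only [if_neg hrt.ne]
  refine NC.add ?_ (NC.sum _ fun s hs => ?_)
  · split_ifs
    · exact hz
    · exact NC.const _ 0
  · rw [Finset.mem_range] at hs
    refine NC.avg (F := fun L l j m => ind a m l * (G (!a) s r b L m j * y (s, false) L m)) ?_
    exact (NC.ind1 a).mul ((h.J2 (hs.trans ht) (hG s hs _) hr b).mul ((hy s hs).app Pj3 Pj3 Pj3))

theorem Ghat_Lp (h : Sys T G c z) {a : Bool} {t : ℕ} (ht : t < T)
    (hG : ∀ s < t, ∀ a, GoodG G a s)
    {r : ℤ} (hr : -1 ≤ r) (hrt : r < t) (b : Bool) :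
    Lp a (Finset.range t ×ˢ Finset.univ) (Ghat G z a t r b) := by
  have e : Ghat G z a t r b = fun y L l m => (if r = -1 ∧ b = a then z a t L else 0) +
    ∑ s ∈ Finset.range t, (1 / (L : ℝ)) * ∑ j ∈ Finset.range L,
      ind a j l * (G (!a) s r b L j m * y (s, false) L j) := by
    funext y L l m
    unfold Ghat
    rw [if_neg hrt.ne]
  rw [e]
  refine Lp.add (Lp.const fun L l m => _) (Lp.sum _ fun s hs => ?_)
  refine Lp.base (i := (s, false)) (g := fun L l m j => G (!a) s r b L j m) ?_ ?_
  · simpa using hs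
  · rw [Finset.mem_range] at hs
    exact (h.J2 (hs.trans ht) (hG s hs _) hr b).1

theorem cnew_NC (h : Sys T G c z) {a : Bool} {t : ℕ} (ht : t < T)
    (hG : ∀ s < t, ∀ a, GoodG G a s) (hC : ∀ s < t, ∀ a, GoodC c a s)
    (hz : NC False (fun L _ _ _ => z a t L)) {s : ℕ} (hs : s < t)
    {y : ℕ × Bool → ℕ → ℕ → ℝ}
    (hy : ∀ s < t, ∀ k, NC False (fun L l _ _ => y (s, k) L l)) :
    NC False (fun L l _ _ => cnew G c z a t s y L l) := by
  unfold cnew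
  refine NC.sum _ fun t' ht' => NC.sum _ fun s' hs' => NC.sum _ fun b _ => ?_
  rw [Finset.mem_Icc] at ht' hs'
  refine NC.avg (F := fun L l j m => Ghat G z a t t' b y L l m * chat c t t' s' b y L m
    * G a s s' b L l m) ?_
  refine NC.mul (NC.mul ?_ ?_) (h.J1 (hs.trans ht) (hG s hs a) hs'.1 b)
  · by_cases e : t' = t
    · by_cases hb : b = a
      · exact (NC.ind1 a).congr fun L l j m hl _ hm => by
          rw [Ghat, if_pos e, h.Gtt a ht b hl hm, if_pos hb]
      · exact (NC.const _ 0).congr fun L l j m hl _ hm => by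
          rw [Ghat, if_pos e, h.Gtt a ht b hl hm, if_neg hb]
    · exact (Ghat_NC h ht hG hz ht'.1 (lt_of_le_of_ne ht'.2 e) b (fun s hs => hy s hs _)).app
        Pj1 Pj3 Pj3
  · by_cases e : t' = t
    · by_cases e2 : s' = -1
      · refine (NC.const _ 0).congr fun L l j m _ _ _ => ?_
        rw [chat, if_pos e, if_pos e2]
      · refine ((hy s'.toNat (by omega) true).app Pj3 Pj3 Pj3).congr fun L l j m _ _ _ => ?_
        rw [chat, if_pos e, if_neg e2]
    · refine ((h.cNC (t := t) (fun s hs => hC s hs b) ht'.1 (lt_of_le_of_ne ht'.2 e) hs'.1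
        (by omega)).app Pj3 Pj3 Pj3).congr fun L l j m _ _ _ => ?_
      rw [chat, if_neg e]

theorem cnew_Lp (h : Sys T G c z) {a : Bool} {t : ℕ} (ht : t < T)
    (hG : ∀ s < t, ∀ a, GoodG G a s) (hC : ∀ s < t, ∀ a, GoodC c a s) {s : ℕ} (hs : s < t) :
    Lp a (Finset.range t ×ˢ Finset.univ) (fun y L l _ => cnew G c z a t s y L l) := by
  unfold cnew
  refine Lp.sum _ fun t' ht' => Lp.sum _ fun s' hs' => Lp.sum _ fun b _ => ?_
  rw [Finset.mem_Icc] at ht' hs'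
  have hGs := h.J1 (hs.trans ht) (hG s hs a) hs'.1 b
  by_cases e : t' = t
  · by_cases e2 : s' = -1
    · simp only [chat, if_pos e, if_pos e2, mul_zero, zero_mul, Finset.sum_const_zero]
      exact Lp.const fun _ _ _ => 0
    by_cases hb : b = a
    · obtain ⟨M, hM, N, hN⟩ := Lp.base (a := a) (S := Finset.range t ×ˢ Finset.univ)
        (i := (s'.toNat, true)) (g := fun L l m j => G a s s' b L l j)
        (by simp; omega) hGs.1
      refine ⟨M, hM, N, fun L hL y y' l hl m hm => ?_⟩
      have hh := hN L hL y y' l hl m hm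
      beta_reduce at hh
      have key : ∀ y : ℕ × Bool → ℕ → ℕ → ℝ, ∀ j ∈ Finset.range L,
          ind a j l * (G a s s' b L l j * y (s'.toNat, true) L j) =
          Ghat G z a t t' b y L l j * chat c t t' s' b y L j * G a s s' b L l j := by
        intro y j hj
        rw [Finset.mem_range] at hj
        simp only [Ghat, chat, if_pos e, if_neg e2, h.Gtt a ht b hl hj, if_pos hb]
        ring
      rw [Finset.sum_congr rfl (key y), Finset.sum_congr rfl (key y')] at hh
      exact hh
    · refine ⟨0, le_rfl, 0, fun L hL y y' l hl m hm => ?_⟩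
      have key : ∀ y : ℕ × Bool → ℕ → ℕ → ℝ, ∀ j ∈ Finset.range L,
          Ghat G z a t t' b y L l j * chat c t t' s' b y L j * G a s s' b L l j = 0 := by
        intro y j hj
        rw [Finset.mem_range] at hj
        simp only [Ghat, if_pos e, h.Gtt a ht b hl hj, if_neg hb, zero_mul]
      beta_reduce
      rw [Finset.sum_eq_zero (key y), Finset.sum_eq_zero (key y')]
      simp
  · simp only [chat, if_neg e]
    have hcb := (h.cNC (t := t) (fun s hs => hC s hs b) ht'.1 (lt_of_le_of_ne ht'.2 e) hs'.1
        (by omega)).app (s := True) Pj3 Pj3 Pj3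
    refine Lp.avg (Φ := fun y L l m => Ghat G z a t t' b y L l m * c t' s' b L m
      * G a s s' b L l m) ?_
    refine Lp.mul (Lp.mul ?_ hcb.1) hGs.1
    exact Ghat_Lp h ht hG ht'.1 (lt_of_le_of_ne ht'.2 e) b

/-- The unknowns of a sweep. -/
noncomputable def unk (G : Bool → ℕ → ℤ → Bool → ℕ → ℕ → ℕ → ℝ)
    (c : ℤ → ℤ → Bool → ℕ → ℕ → ℝ) (a : Bool) (t : ℕ) : ℕ × Bool → ℕ → ℕ → ℝ :=
  fun i L l => if i.2 then c t i.1 a L l else G a t i.1 (!a) L l l - c t i.1 a L l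

theorem Ghat_unk (h : Sys T G c z) {a : Bool} {t : ℕ} (ht : t < T) {r : ℤ} (hr : -1 ≤ r)
    (hrt : r ≤ t) (b : Bool) {L l m : ℕ} (hl : l < L) (hm : m < L) :
    Ghat G z a t r b (unk G c a t) L l m = G a t r b L l m := by
  unfold Ghat
  by_cases e : r = t
  · rw [if_pos e, e]
  · rw [if_neg e, h.E1 a t ht r hr hrt b L l m hl hm, if_neg (c := (t : ℤ) = r ∧ b = a)
      (fun hh => e hh.1.symm), add_zero]
    congr 1
    simp only [unk, Bool.false_eq_true, if_false, Finset.mul_sum]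
    rw [Finset.sum_comm]

theorem cnew_unk (h : Sys T G c z) {a : Bool} {t : ℕ} (ht : t < T) {s : ℕ} (hs : s < t)
    {L l : ℕ} (hl : l < L) : cnew G c z a t s (unk G c a t) L l = c t s a L l := by
  rw [h.E2 a t ht s hs.le L l hl]
  unfold cnew
  refine Finset.sum_congr rfl fun t' ht' => Finset.sum_congr rfl fun s' hs' =>
    Finset.sum_congr rfl fun b _ => ?_
  rw [Finset.mem_Icc] at ht' hs'
  congr 1
  refine Finset.sum_congr rfl fun m hm => ?_
  rw [Finset.mem_range] at hm
  rw [Ghat_unk h ht ht'.1 ht'.2 b hl hm]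
  congr 1
  unfold chat
  split_ifs with e e2
  · rw [e, e2, h.mixed t (by omega) _ _ _ hm]
  · subst e
    rw [h.Gtt a ht b hl hm]
    by_cases hb : b = a
    · subst hb
      have : ((s'.toNat : ℕ) : ℤ) = s' := Int.toNat_of_nonneg (by omega)
      simp only [unk, if_true, this]
    · simp [hb]
  · rfl

/-- One sweep: convergence of `Γ_{t,r,a,·}`, `r < t`. -/
theorem sweep (h : Sys T G c z) {a : Bool} {t : ℕ} (ht : t < T)
    (hG : ∀ s < t, ∀ a, GoodG G a s) (hC : ∀ s < t, ∀ a, GoodC c a s)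
    (hz : NC False (fun L _ _ _ => z a t L)) : GoodG G a t ∧ GoodC c a t := by
  have hunk : ∀ i ∈ Finset.range t ×ˢ (Finset.univ : Finset Bool),
      NC False (fun L l _ _ => unk G c a t i L l) := by
    refine volterra a _ (unk G c a t) (fun y i L l => if i.2 then cnew G c z a t i.1 y L l else
      Ghat G z a t i.1 (!a) y L l l - cnew G c z a t i.1 y L l) ?_ ?_ ?_
    · rintro L l hl ⟨s, k⟩ hi
      simp only [Finset.mem_product, Finset.mem_range, Finset.mem_univ, and_true] at hi
      simp only [cnew_unk h ht hi hl]
      rw [Ghat_unk h ht (by omega) (by omega) _ hl hl]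
      simp only [unk]
    · rintro y hy ⟨s, k⟩ hi
      simp only [Finset.mem_product, Finset.mem_range, Finset.mem_univ, and_true] at hi
      have hy' : ∀ s < t, ∀ k, NC False (fun L l _ _ => y (s, k) L l) := fun s hs k =>
        hy (s, k) (by simpa using hs)
      have h1 := cnew_NC h ht hG hC hz hi hy'
      cases k with
      | true => exact h1
      | false =>
        exact ((Ghat_NC h ht hG hz (r := s) (by omega) (by omega) (!a)
          (fun s hs => hy' s hs _)).app Pj1 Pj1 Pj1).sub h1
    · rintro ⟨s, k⟩ hi
      simp only [Finset.mem_product, Finset.mem_range, Finset.mem_univ, and_true] at hi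
      have h1 := cnew_Lp (z := z) (a := a) h ht hG hC hi
      cases k with
      | true => exact h1
      | false =>
        exact (Ghat_Lp h ht hG (r := s) (by omega) (by omega) (!a)).diag.sub h1
  have hcs : ∀ s < t, NC False (fun L l _ _ => c t s a L l) := fun s hs =>
    hunk (s, true) (by simpa using hs)
  have hGG : GoodG G a t := by
    intro r hr hrt b
    refine (Ghat_NC h ht hG hz hr hrt b (y := unk G c a t)
      (fun s hs => hunk (s, false) (by simpa using hs))).congr ?_
    intro L l j m hl hj hm
    exact Ghat_unk h ht hr hrt.le b hl hj
  refine ⟨hGG, fun s hs => ?_⟩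
  rcases hs.lt_or_eq with hs | rfl
  · exact hcs s hs
  -- the diagonal covariance
  have hJ := fun (r : ℤ) (hr : -1 ≤ r) (b : Bool) => h.J1 ht hGG hr b
  have := volterra a ({()} : Finset Unit) (fun _ => c s s a) (fun y _ L l =>
      ∑ t' ∈ Finset.Icc (-1 : ℤ) s, ∑ s' ∈ Finset.Icc (-1 : ℤ) s, ∑ b : Bool,
      (1 / (L : ℝ)) * ∑ m ∈ Finset.range L,
        G a s t' b L l m * (if t' = s ∧ s' = s then y () L m else c t' s' b L m)
          * G a s s' b L l m) ?_ ?_ ?_ () (by simp)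
  · exact this
  · intro L l hl _ _
    rw [h.E2 a s ht s le_rfl L l hl]
    refine Finset.sum_congr rfl fun t' ht' => Finset.sum_congr rfl fun s' hs' =>
      Finset.sum_congr rfl fun b _ => ?_
    congr 1
    refine Finset.sum_congr rfl fun m hm => ?_
    rw [Finset.mem_range] at hm
    congr 1
    split_ifs with e
    · obtain ⟨rfl, rfl⟩ := e
      rw [h.Gtt a ht b hl hm]
      by_cases hb : b = a
      · rw [hb]
      · simp [hb]
    · rfl
  · intro y hy _ _
    refine NC.sum _ fun t' ht' => NC.sum _ fun s' hs' => NC.sum _ fun b _ => ?_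
    rw [Finset.mem_Icc] at ht' hs'
    refine NC.avg (F := fun L l j m => G a s t' b L l m *
      (if t' = s ∧ s' = s then y () L m else c t' s' b L m) * G a s s' b L l m) ?_
    by_cases e : t' = s ∧ s' = s
    · simp only [if_pos e]
      exact ((hJ t' ht'.1 b).mul ((hy () (by simp)).app Pj3 Pj3 Pj3)).mul (hJ s' hs'.1 b)
    simp only [if_neg e]
    by_cases hb : (t' = s ∨ s' = s) ∧ b ≠ a
    · refine (NC.const _ 0).congr fun L l j m hl _ hm => ?_
      rcases hb with ⟨rfl | rfl, hb⟩
      · rw [h.Gtt a ht b hl hm, if_neg hb]; ring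
      · rw [h.Gtt a ht b hl hm, if_neg hb]; ring
    refine NC.mul (NC.mul (hJ t' ht'.1 b) ?_) (hJ s' hs'.1 b)
    refine NC.app (u := fun _ _ m => m) (v := fun _ _ m => m) (w := fun _ _ m => m)
      (F := fun L m _ _ => c t' s' b L m) ?_ Pj3 Pj3 Pj3
    by_cases e1 : t' = s
    · have hb' : b = a := by by_contra hne; exact hb ⟨Or.inl e1, hne⟩
      subst e1 hb'
      rcases hs'.1.eq_or_lt with rfl | h3
      · exact (NC.const _ 0).congr fun L l j m hl _ _ => by rw [h.mixed _ (by omega) _ _ _ hl]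
      · lift s' to ℕ using (by omega)
        exact hcs s' (by omega)
    by_cases e2 : s' = s
    · have hb' : b = a := by by_contra hne; exact hb ⟨Or.inr e2, hne⟩
      subst e2 hb'
      rcases ht'.1.eq_or_lt with rfl | h3
      · exact (NC.const _ 0).congr fun L l j m hl _ _ => by
          rw [h.symm _ _ _ _ _ hl, h.mixed _ (by omega) _ _ _ hl]
      · lift t' to ℕ using (by omega)
        exact (hcs t' (by omega)).congr fun L l j m hl _ _ => by
          rw [h.symm _ _ _ _ _ hl]
    exact h.cNC (t := s) (fun s hs => hC s hs b) ht'.1 (by omega) hs'.1 (by omega)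
  · intro _ _
    refine Lp.sum _ fun t' ht' => Lp.sum _ fun s' hs' => Lp.sum _ fun b _ => ?_
    by_cases e : t' = s ∧ s' = s
    · simp only [if_pos e]
      obtain ⟨rfl, rfl⟩ := e
      obtain ⟨M, hM, N, hN⟩ := Lp.base (a := a) (S := ({()} : Finset Unit)) (i := ())
        (g := fun L l m j => G a s s b L l j) (by simp) (hJ s (by omega) b).1
      refine ⟨M, hM, N, fun L hL y y' l hl m hm => ?_⟩
      have hh := hN L hL y y' l hl m hm
      beta_reduce at hh
      have key : ∀ y : Unit → ℕ → ℕ → ℝ, ∀ j ∈ Finset.range L,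
          ind a j l * (G a s s b L l j * y () L j) =
          G a s s b L l j * y () L j * G a s s b L l j := by
        intro y j hj
        rw [Finset.mem_range] at hj
        rw [h.Gtt a ht b hl hj]
        split_ifs <;> ring
      rw [Finset.sum_congr rfl (key y), Finset.sum_congr rfl (key y')] at hh
      exact hh
    · simp only [if_neg e]
      exact Lp.const fun L l _ => _

/-- The main induction. -/
theorem Sys.main (h : Sys T G c z) (f : ℕ → ℕ → ℝ) (ℓ' : ℕ → ℝ → ℝ)
    (hcont : ∀ t, Continuous (ℓ' t))
    (hz0 : ∀ t < T, NC False (fun L _ _ _ => z false t L))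
    (hz1 : ∀ t < T, ∀ L, 1 ≤ L → z true t L = ℓ' t (f t L))
    (hf : ∀ t < T, ∀ L, 1 ≤ L → f t L = (1 / (L : ℝ)) * ∑ j ∈ Finset.range L,
      ∑ s ∈ Finset.range t, G true s (-1) true L j (L - 1) *
        (G false t s true L j j - c t s false L j)) :
    ∀ t < T, ∀ a, GoodG G a t ∧ GoodC c a t := by
  intro t
  induction t using Nat.strong_induction_on with
  | _ t ih =>
    intro ht
    have hG : ∀ s < t, ∀ a, GoodG G a s := fun s hs a => (ih s hs (hs.trans ht) a).1
    have hC : ∀ s < t, ∀ a, GoodC c a s := fun s hs a => (ih s hs (hs.trans ht) a).2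
    have h0 := sweep h ht hG hC (hz0 t ht)
    have hF : NC False (fun L l _ _ => (1 / (L : ℝ)) * ∑ j ∈ Finset.range L,
        ∑ s ∈ Finset.range t, G true s (-1) true L j l *
          (G false t s true L j j - c t s false L j)) := by
      refine NC.avg (F := fun L l _ j => ∑ s ∈ Finset.range t, G true s (-1) true L j l *
          (G false t s true L j j - c t s false L j)) ?_
      refine NC.sum _ fun s hs => ?_
      rw [Finset.mem_range] at hs
      refine ((hG s hs true (-1) le_rfl (by omega) true).app Pj3 Pj1 Pj1).mul (NC.sub ?_ ?_)
      · exact (h0.1 s (by omega) (by omega) true).app Pj3 Pj3 Pj3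
      · exact (h0.2 s hs.le).app Pj3 Pj3 Pj3
    obtain ⟨x, hx⟩ := cauchySeq_tendsto_of_complete hF.cauchy_last
    have hfx : Tendsto (f t) atTop (𝓝 x) := by
      refine hx.congr' ?_
      filter_upwards [eventually_ge_atTop 1] with L hL
      rw [hf t ht L hL]
    have hz : NC False (fun L _ _ _ => z true t L) := by
      refine NC.of_tendsto (x := ℓ' t x) ?_
      refine (((hcont t).tendsto x).comp hfx).congr' ?_
      filter_upwards [eventually_ge_atTop 1] with L hL
      rw [hz1 t ht L hL]; rfl
    have h1 := sweep h ht hG hC hz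
    intro a
    cases a
    · exact h0
    · exact h1

end SysLemmas

/-! ### From the recursion to the discrete system -/

theorem ceil_grid {L m : ℕ} {q : ℝ} (hL : 1 ≤ L) (h1 : (m : ℝ) / L < q)
    (h2 : q ≤ ((m : ℝ) + 1) / L) : ⌈(L : ℝ) * q⌉ = (m : ℤ) + 1 := by
  have hL' : (0 : ℝ) < L := by exact_mod_cast hL
  rw [div_lt_iff₀ hL'] at h1
  rw [le_div_iff₀ hL'] at h2
  rw [Int.ceil_eq_iff]
  push_cast
  constructor <;> linarith

theorem grid_pos {L m : ℕ} (hm : m < L) : 0 < ((m : ℝ) + 1) / L ∧ ((m : ℝ) + 1) / L ≤ 1 := by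
  have hL' : (0 : ℝ) < L := by exact_mod_cast (Nat.zero_le m).trans_lt hm
  have : (m : ℝ) + 1 ≤ L := by exact_mod_cast hm
  exact ⟨by positivity, (div_le_one hL').2 this⟩

theorem grid_lt {L m : ℕ} (hm : m < L) : (m : ℝ) / L < ((m : ℝ) + 1) / L := by
  have hL' : (0 : ℝ) < L := by exact_mod_cast (Nat.zero_le m).trans_lt hm
  exact (div_lt_div_iff_of_pos_right hL').2 (by linarith)

/-- Integral of a step function on the grid. -/
theorem step_integral {L : ℕ} (hL : 1 ≤ L) (g : ℝ → ℝ) (v : ℕ → ℝ)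
    (h : ∀ m < L, ∀ q : ℝ, (m : ℝ) / L < q → q ≤ ((m : ℝ) + 1) / L → g q = v m) :
    ∫ q in Ioc (0 : ℝ) 1, g q = (1 / (L : ℝ)) * ∑ m ∈ Finset.range L, v m := by
  have hL' : (0 : ℝ) < L := by exact_mod_cast hL
  have hle : ∀ m : ℕ, (m : ℝ) / L ≤ ((m + 1 : ℕ) : ℝ) / L := fun m =>
    div_le_div_of_nonneg_right (by push_cast; linarith) hL'.le
  have heq : ∀ m < L, ∀ q ∈ Ioc ((m : ℝ) / L) (((m + 1 : ℕ) : ℝ) / L), g q = v m := by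
    intro m hm q hq
    refine h m hm q hq.1 ?_
    have := hq.2
    push_cast at this
    exact this
  have hgint : ∀ m < L, IntervalIntegrable g volume ((m : ℝ) / L) (((m + 1 : ℕ) : ℝ) / L) := by
    intro m hm
    rw [intervalIntegrable_iff_integrableOn_Ioc_of_le (hle m)]
    refine (integrableOn_congr_fun (heq m hm) measurableSet_Ioc).2 ?_
    exact integrableOn_const (by simp)
  have hs := intervalIntegral.sum_integral_adjacent_intervals (a := fun m : ℕ => (m : ℝ) / L)
    (n := L) (f := g) (μ := volume) hgint
  simp only [Nat.cast_zero, zero_div, div_self hL'.ne'] at hs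
  rw [← intervalIntegral.integral_of_le zero_le_one, ← hs, Finset.mul_sum]
  refine Finset.sum_congr rfl fun m hm => ?_
  rw [intervalIntegral.integral_of_le (hle m),
    setIntegral_congr_fun measurableSet_Ioc (heq m (Finset.mem_range.1 hm))]
  rw [← intervalIntegral.integral_of_le (hle m), intervalIntegral.integral_const, smul_eq_mul]
  push_cast
  field_simp
  ring

section Single
variable {T L : ℕ} {ξ : ℕ → ℝ} {ℓ' : ℕ → ℝ → ℝ} {Γ : ℕ → ℤ → Bool → Bool → ℝ → ℝ → ℝ}
    {C : ℤ → ℤ → Bool → ℝ → ℝ} {f χ : ℕ → ℝ}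

theorem fwd_closed (h : IsLinearTP T L ξ ℓ' Γ C f χ) (hL : 1 ≤ L) {t : ℕ} (ht : t < T) {r : ℤ}
    (hr : -1 ≤ r) (hrt : r ≤ t) (b : Bool) {q : ℝ} (hq : 0 < q) (hq1 : q ≤ 1) (l : ℕ)
    (hl : l ≤ L) :
    Γ t r false b ((l : ℝ) / L) q = (if r = -1 ∧ b = false then ξ t else 0)
      + (if (t : ℤ) = r ∧ b = false then (if ⌈(L : ℝ) * q⌉ ≤ (l : ℤ) then 1 else 0) else 0)
      + (1 / (L : ℝ)) * ∑ j ∈ Finset.range l, ∑ s ∈ Finset.range t,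
          Γ s r true b (((j : ℝ) + 1) / L) q *
            (Γ t s false true ((j : ℝ) / L) (((j : ℝ) + 1) / L)
              - C t s false (((j : ℝ) + 1) / L)) := by
  have hL' : (0 : ℝ) < L := by exact_mod_cast hL
  induction l with
  | zero =>
    have h0 : ¬ (⌈(L : ℝ) * q⌉ ≤ ((0 : ℕ) : ℤ)) := by
      rw [not_le]
      exact_mod_cast Int.ceil_pos.2 (mul_pos hL' hq)
    rw [Nat.cast_zero, zero_div, h.fwd_init t ht r hr hrt b q hq hq1, if_neg h0]
    simp
  | succ l ih =>
    have e : (((l + 1 : ℕ) : ℝ) - 1) = l := by push_cast; ring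
    have hs := h.fwd_step t ht (l + 1) (by omega) hl r hr hrt b (((l + 1 : ℕ) : ℝ) / L) q
      (by rw [e, Nat.cast_add, Nat.cast_one]; exact grid_lt hl) le_rfl hq hq1
    rw [e, ih (by omega)] at hs
    rw [hs, Finset.sum_range_succ, mul_add]
    have e2 : ∀ P : Prop, [Decidable P] → ((if P then
          (if ⌈(L : ℝ) * q⌉ ≤ ((l + 1 : ℕ) : ℤ) then (1 : ℝ) else 0) else 0)) =
        (if P then (if ⌈(L : ℝ) * q⌉ ≤ (l : ℤ) then (1 : ℝ) else 0) else 0) +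
        (if P ∧ ((l + 1 : ℕ) : ℤ) = ⌈(L : ℝ) * q⌉ then 1 else 0) := by
      intro P _
      by_cases hP : P
      · simp only [hP, if_true, true_and]
        split_ifs <;> first | omega | norm_num
      · simp [hP]
    rw [e2]
    simp only [and_assoc, Nat.cast_add, Nat.cast_one]
    ring

theorem bwd_closed (h : IsLinearTP T L ξ ℓ' Γ C f χ) (hL : 1 ≤ L) {t : ℕ} (ht : t < T) {r : ℤ}
    (hr : -1 ≤ r) (hrt : r ≤ t) (b : Bool) {q : ℝ} (hq : 0 < q) (hq1 : q ≤ 1) (d : ℕ) :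
    ∀ l : ℕ, l + d = L → 1 ≤ l →
    Γ t r true b ((l : ℝ) / L) q = (if r = -1 ∧ b = true then χ t else 0)
      + (if (t : ℤ) = r ∧ b = true then (if (l : ℤ) < ⌈(L : ℝ) * q⌉ then 1 else 0) else 0)
      + (1 / (L : ℝ)) * ∑ j ∈ Finset.Ico l L, ∑ s ∈ Finset.range t,
          Γ s r false b ((j : ℝ) / L) q *
            (Γ t s true false (((j : ℝ) + 1) / L) (((j : ℝ) + 1) / L)
              - C t s true (((j : ℝ) + 1) / L)) := by
  have hL' : (0 : ℝ) < L := by exact_mod_cast hL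
  induction d with
  | zero =>
    intro l hl _
    have hl' : l = L := by omega
    subst hl'
    have h0 : ¬ ((l : ℤ) < ⌈(l : ℝ) * q⌉) := by
      rw [not_lt, Int.ceil_le]
      push_cast
      nlinarith
    rw [div_self hL'.ne', h.bwd_init t ht r hr hrt b q hq hq1, if_neg h0]
    simp
  | succ d ih =>
    intro l hl hl1
    have ih' := ih (l + 1) (by omega) (by omega)
    have e : (((l + 1 : ℕ) : ℝ) - 1) = l := by push_cast; ring
    have hs := h.bwd_step t ht (l + 1) (by omega) (by omega) r hr hrt b ((l : ℝ) / L) q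
      (by
        refine div_lt_div_of_pos_right ?_ hL'
        push_cast
        linarith) (by rw [e]) (by positivity) hq hq1
    rw [e, ih'] at hs
    rw [hs, Finset.sum_eq_sum_Ico_succ_bot (by omega : l < L), mul_add]
    have e2 : ∀ P : Prop, [Decidable P] → ((if P then
          (if (l : ℤ) < ⌈(L : ℝ) * q⌉ then (1 : ℝ) else 0) else 0)) =
        (if P then (if ((l + 1 : ℕ) : ℤ) < ⌈(L : ℝ) * q⌉ then (1 : ℝ) else 0) else 0) +
        (if P ∧ ((l + 1 : ℕ) : ℤ) = ⌈(L : ℝ) * q⌉ then 1 else 0) := by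
      intro P _
      by_cases hP : P
      · simp only [hP, if_true, true_and]
        split_ifs <;> first | omega | norm_num
      · simp [hP]
    rw [e2]
    simp only [and_assoc, Nat.cast_add, Nat.cast_one]
    ring

theorem Γ_q (h : IsLinearTP T L ξ ℓ' Γ C f χ) (hL : 1 ≤ L) (t : ℕ) (ht : t < T) {r : ℤ}
    (hr : -1 ≤ r) (b : Bool) {m : ℕ} (hm : m < L) {q : ℝ} (h1 : (m : ℝ) / L < q)
    (h2 : q ≤ ((m : ℝ) + 1) / L) :
    (∀ l : ℕ, l ≤ L → Γ t r false b ((l : ℝ) / L) q = Γ t r false b ((l : ℝ) / L) (((m : ℝ) + 1) / L)) ∧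
    (∀ l : ℕ, l < L → Γ t r true b (((l : ℝ) + 1) / L) q =
      Γ t r true b (((l : ℝ) + 1) / L) (((m : ℝ) + 1) / L)) := by
  have hq : 0 < q := lt_of_le_of_lt (by positivity) h1
  have hq1 : q ≤ 1 := h2.trans (grid_pos hm).2
  have hc := ceil_grid hL h1 h2
  have hc' := ceil_grid hL (grid_lt hm) le_rfl
  induction t using Nat.strong_induction_on with
  | _ t ih =>
    rcases lt_or_ge (t : ℤ) r with hrt | hrt
    · simp only [h.Γ_vanish t r hrt, implies_true, and_self]
    constructor
    · intro l hl
      rw [fwd_closed h hL ht hr hrt b hq hq1 l hl,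
        fwd_closed h hL ht hr hrt b (grid_pos hm).1 (grid_pos hm).2 l hl, hc, hc']
      congr 2
      refine Finset.sum_congr rfl fun j hj => Finset.sum_congr rfl fun s hs => ?_
      rw [Finset.mem_range] at hj hs
      rw [(ih s hs (hs.trans ht)).2 j (by omega)]
    · intro l hl
      have e1 := bwd_closed h hL ht hr hrt b hq hq1 (L - (l + 1)) (l + 1) (by omega) (by omega)
      have e2 := bwd_closed h hL ht hr hrt b (grid_pos hm).1 (grid_pos hm).2
        (L - (l + 1)) (l + 1) (by omega) (by omega)
      rw [Nat.cast_add, Nat.cast_one] at e1 e2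
      rw [e1, e2, hc, hc']
      congr 2
      refine Finset.sum_congr rfl fun j hj => Finset.sum_congr rfl fun s hs => ?_
      rw [Finset.mem_Ico] at hj
      rw [Finset.mem_range] at hs
      rw [(ih s hs (hs.trans ht)).1 j (by omega)]

theorem C_q_aux (h : IsLinearTP T L ξ ℓ' Γ C f χ) {t s : ℕ} (ht : t < T) (hs : s ≤ t)
    (a : Bool) {m : ℕ} (hm : m < L) {q : ℝ} (h1 : (m : ℝ) / L < q) (h2 : q ≤ ((m : ℝ) + 1) / L) :
    C t s a q = C t s a (((m : ℝ) + 1) / L) := by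
  have e : (((m + 1 : ℕ) : ℝ) - 1) = m := by push_cast; ring
  have e2 : ((m + 1 : ℕ) : ℝ) = (m : ℝ) + 1 := by push_cast; ring
  cases a
  · rw [h.fwd_C t ht s hs (m + 1) (by omega) hm q (by rwa [e]) (by rwa [e2]),
      h.fwd_C t ht s hs (m + 1) (by omega) hm (((m : ℝ) + 1) / L) (by rw [e]; exact grid_lt hm)
        (by rw [e2])]
  · rw [h.bwd_C t ht s hs (m + 1) (by omega) hm q (by rwa [e]) (by rwa [e2]),
      h.bwd_C t ht s hs (m + 1) (by omega) hm (((m : ℝ) + 1) / L) (by rw [e]; exact grid_lt hm)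
        (by rw [e2])]

theorem C_q (h : IsLinearTP T L ξ ℓ' Γ C f χ) {t s : ℤ} (ht : t < T) (ht0 : -1 ≤ t)
    (hs : s < T) (hs0 : -1 ≤ s)
    (a : Bool) {m : ℕ} (hm : m < L) {q : ℝ} (h1 : (m : ℝ) / L < q) (h2 : q ≤ ((m : ℝ) + 1) / L) :
    C t s a q = C t s a (((m : ℝ) + 1) / L) := by
  rcases ht0.eq_or_lt with rfl | h3
  · rcases hs0.eq_or_lt with rfl | h4
    · rw [h.C_base, h.C_base]
    · rw [h.C_symm, h.C_mixed s (by omega), h.C_symm, h.C_mixed s (by omega)]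
  · rcases hs0.eq_or_lt with rfl | h4
    · rw [h.C_mixed t (by omega), h.C_mixed t (by omega)]
    · lift t to ℕ using (by omega)
      lift s to ℕ using (by omega)
      rcases le_total s t with hst | hst
      · exact C_q_aux h (by omega) hst a hm h1 h2
      · rw [h.C_symm, C_q_aux h (by omega) hst a hm h1 h2, h.C_symm]

end Single

/-- Discretised coefficient functions. -/
noncomputable def GG (Γ : ℕ → ℕ → ℤ → Bool → Bool → ℝ → ℝ → ℝ) :
    Bool → ℕ → ℤ → Bool → ℕ → ℕ → ℕ → ℝ
  | false, t, r, b, L, l, m => Γ L t r false b ((l : ℝ) / L) (((m : ℝ) + 1) / L)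
  | true, t, r, b, L, l, m => Γ L t r true b (((l : ℝ) + 1) / L) (((m : ℝ) + 1) / L)

/-- Discretised covariances. -/
noncomputable def cc (C : ℕ → ℤ → ℤ → Bool → ℝ → ℝ) : ℤ → ℤ → Bool → ℕ → ℕ → ℝ :=
  fun t s a L l => C L t s a (((l : ℝ) + 1) / L)

/-- Inputs of the sweeps. -/
def zz (ξ : ℕ → ℝ) (χ : ℕ → ℕ → ℝ) : Bool → ℕ → ℕ → ℝ
  | false, t, _ => ξ t
  | true, t, L => χ L t

theorem sum_ind_false {L l : ℕ} (hl : l < L) (g : ℕ → ℝ) :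
    ∑ j ∈ Finset.range L, ind false j l * g j = ∑ j ∈ Finset.range l, g j := by
  have : Finset.range l = (Finset.range L).filter (fun j => j < l) := by
    ext j; simp only [Finset.mem_range, Finset.mem_filter]; omega
  rw [this, Finset.sum_filter]
  refine Finset.sum_congr rfl fun j _ => ?_
  simp only [ind]
  split_ifs <;> simp

theorem sum_ind_true {L l : ℕ} (g : ℕ → ℝ) :
    ∑ j ∈ Finset.range L, ind true j l * g j = ∑ j ∈ Finset.Ico (l + 1) L, g j := by
  have : Finset.Ico (l + 1) L = (Finset.range L).filter (fun j => l < j) := by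
    ext j; simp only [Finset.mem_range, Finset.mem_filter, Finset.mem_Ico]; omega
  rw [this, Finset.sum_filter]
  refine Finset.sum_congr rfl fun j _ => ?_
  simp only [ind]
  split_ifs <;> simp

theorem sys_of_TP {T : ℕ} {ξ : ℕ → ℝ} {ℓ' : ℕ → ℝ → ℝ}
    {Γ : ℕ → ℕ → ℤ → Bool → Bool → ℝ → ℝ → ℝ} {C : ℕ → ℤ → ℤ → Bool → ℝ → ℝ}
    {f χ : ℕ → ℕ → ℝ}
    (hTP : ∀ L : ℕ, 1 ≤ L → IsLinearTP T L ξ ℓ' (Γ L) (C L) (f L) (χ L)) :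
    Sys T (GG Γ) (cc C) (zz ξ χ) where
  symm t s a L l hl := (hTP L (by omega)).C_symm _ _ _ _
  base a L l hl := (hTP L (by omega)).C_base _ _
  mixed t ht a L l hl := (hTP L (by omega)).C_mixed _ ht _ _
  vanish t r hr a b L l m hl := by
    cases a <;> exact (hTP L (by omega)).Γ_vanish _ _ hr _ _ _ _
  E1 a t ht r hr hrt b L l m hl hm := by
    have hL : 1 ≤ L := by omega
    have hc' := ceil_grid hL (grid_lt hm) le_rfl
    cases a
    · rw [sum_ind_false hl]
      simp only [GG, cc, zz, Bool.not_false]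
      rw [fwd_closed (hTP L hL) hL ht hr hrt b (grid_pos hm).1 (grid_pos hm).2 l hl.le, hc']
      have : ((m : ℤ) + 1 ≤ l) ↔ m < l := by omega
      simp only [this, ind]
    · rw [sum_ind_true]
      simp only [GG, cc, zz, Bool.not_true]
      have e1 := bwd_closed (hTP L hL) hL ht hr hrt b (grid_pos hm).1 (grid_pos hm).2
        (L - (l + 1)) (l + 1) (by omega) (by omega)
      rw [hc', Nat.cast_add, Nat.cast_one] at e1
      rw [e1]
      have : (((l + 1 : ℕ) : ℤ) < (m : ℤ) + 1) ↔ l < m := by omega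
      simp only [this, ind]
  E2 a t ht s hs L l hl := by
    have hL : 1 ≤ L := by omega
    have h := hTP L hL
    have e : (((l + 1 : ℕ) : ℝ) - 1) = l := by push_cast; ring
    have e2 : ((l + 1 : ℕ) : ℝ) = (l : ℝ) + 1 := by push_cast; ring
    cases a
    · simp only [cc]
      rw [h.fwd_C t ht s hs (l + 1) (by omega) hl (((l : ℝ) + 1) / L)
        (by rw [e]; exact grid_lt hl) (by rw [e2])]
      refine Finset.sum_congr rfl fun t' ht' => Finset.sum_congr rfl fun s' hs' =>
        Finset.sum_congr rfl fun b _ => ?_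
      rw [Finset.mem_Icc] at ht' hs'
      refine step_integral hL _ _ fun m hm q h1 h2 => ?_
      rw [e, (Γ_q h hL t ht ht'.1 b hm h1 h2).1 l hl.le,
        (Γ_q h hL s (by omega) hs'.1 b hm h1 h2).1 l hl.le,
        C_q h (by omega) ht'.1 (by omega) hs'.1 b hm h1 h2]
      rfl
    · simp only [cc]
      rw [h.bwd_C t ht s hs (l + 1) (by omega) hl (((l : ℝ) + 1) / L)
        (by rw [e]; exact grid_lt hl) (by rw [e2])]
      refine Finset.sum_congr rfl fun t' ht' => Finset.sum_congr rfl fun s' hs' =>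
        Finset.sum_congr rfl fun b _ => ?_
      rw [Finset.mem_Icc] at ht' hs'
      refine step_integral hL _ _ fun m hm q h1 h2 => ?_
      rw [e2, (Γ_q h hL t ht ht'.1 b hm h1 h2).2 l hl,
        (Γ_q h hL s (by omega) hs'.1 b hm h1 h2).2 l hl,
        C_q h (by omega) ht'.1 (by omega) hs'.1 b hm h1 h2]
      rfl

theorem f_formula {T : ℕ} {ξ : ℕ → ℝ} {ℓ' : ℕ → ℝ → ℝ}
    {Γ : ℕ → ℕ → ℤ → Bool → Bool → ℝ → ℝ → ℝ} {C : ℕ → ℤ → ℤ → Bool → ℝ → ℝ}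
    {f χ : ℕ → ℕ → ℝ}
    (hTP : ∀ L : ℕ, 1 ≤ L → IsLinearTP T L ξ ℓ' (Γ L) (C L) (f L) (χ L)) {t : ℕ} (ht : t < T)
    {L : ℕ} (hL : 1 ≤ L) :
    f L t = (1 / (L : ℝ)) * ∑ j ∈ Finset.range L,
      ∑ s ∈ Finset.range t, GG Γ true s (-1) true L j (L - 1) *
        (GG Γ false t s true L j j - cc C t s false L j) := by
  have hL' : (0 : ℝ) < L := by exact_mod_cast hL
  have h := hTP L hL
  have e := fwd_closed h hL ht (r := -1) le_rfl (by omega) true one_pos le_rfl L le_rfl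
  rw [div_self hL'.ne'] at e
  have e1 : (((L - 1 : ℕ) : ℝ) + 1) / L = 1 := by
    rw [Nat.cast_sub hL]; push_cast; rw [sub_add_cancel, div_self hL'.ne']
  rw [h.f_def t ht, e]
  simp only [GG, cc, e1]
  simp


/-- For every `0 ≤ s ≤ t ≤ T − 1`, the limiting covariance kernel
`K(t,s) = lim_k C^{2^k}_{t,s,1}(1)` of the final-layer features exists. -/
theorem stmt_16
    (T : ℕ) (hT : 1 ≤ T) (ξ : ℕ → ℝ) (ℓ : ℕ → ℝ → ℝ) (ℓ' : ℕ → ℝ → ℝ)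
    (hderiv : ∀ (t : ℕ) (x : ℝ), HasDerivAt (ℓ t) (ℓ' t x) x)
    (hlip : ∀ t : ℕ, LocallyLipschitz (ℓ' t))
    (Γ : ℕ → ℕ → ℤ → Bool → Bool → ℝ → ℝ → ℝ)
    (C : ℕ → ℤ → ℤ → Bool → ℝ → ℝ)
    (f χ : ℕ → ℕ → ℝ)
    (hTP : ∀ L : ℕ, 1 ≤ L → IsLinearTP T L ξ ℓ' (Γ L) (C L) (f L) (χ L)) :
    ∀ t : ℕ, t < T → ∀ s : ℕ, s ≤ t →
      ∃ K : ℝ, Tendsto (fun k : ℕ => C (2 ^ k) (t : ℤ) (s : ℤ) true 1) atTop (𝓝 K) := by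
  intro t ht s hs
  have hmain := (sys_of_TP hTP).main (fun t L => f L t) ℓ' (fun t => (hlip t).continuous)
    (fun t _ => NC.const False (ξ t)) (fun t ht L hL => (hTP L hL).χ_def t ht)
    (fun t ht L hL => f_formula hTP ht hL)
  have hG := (hmain t ht true).2 s hs
  obtain ⟨K, hK⟩ := cauchySeq_tendsto_of_complete hG.cauchy_last
  refine ⟨K, ?_⟩
  have hp : Tendsto (fun k : ℕ => 2 ^ k) atTop (atTop : Filter ℕ) :=
    tendsto_pow_atTop_atTop_of_one_lt one_lt_two
  refine (hK.comp hp).congr fun k => ?_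
  have hL : 1 ≤ 2 ^ k := Nat.one_le_two_pow
  have hL' : (0 : ℝ) < ((2 ^ k : ℕ) : ℝ) := by exact_mod_cast hL
  have e1 : (((2 ^ k - 1 : ℕ) : ℝ) + 1) / ((2 ^ k : ℕ) : ℝ) = 1 := by
    rw [Nat.cast_sub hL, Nat.cast_one, sub_add_cancel, div_self hL'.ne']
  simp only [Function.comp, cc]
  rw [e1]
end

section
/- Linear residual network at initialization: fix integers n, L ≥ 1, a real α, and a nonzero vector x⁰ ∈ ℝⁿ; let W¹, …, W^L be independent n×n random matrices with i.i.d. N(0, 1/n) entries, and define x^l := x^{l−1} + L^{−α} W^l x^{l−1} for l = 1, …, L. Let V ∈ ℝⁿ have i.i.d. N(0, n^{−2}) entries, independent of W¹, …, W^L, and set f₀ := Vᵀ x^L. Then E[f₀²] = n^{−2} · (1 + L^{−2α})^L · ‖x⁰‖². In particular, for α ≥ 1/2 the output second moment E[f₀²] is bounded uniformly over all depths L, while for α < 1/2 it diverges as L → ∞. -/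
open MeasureTheory ProbabilityTheory Finset Filter Topology
open scoped NNReal

/-- The joint law of `L` independent `n × n` random matrices `W¹, …, W^L` with i.i.d.
`N(0, 1/n)` entries together with an independent readout vector `V` with i.i.d.
`N(0, n^{−2})` entries. -/
noncomputable def gaussNetOut (n L : ℕ) :
    Measure ((Fin L → Fin n → Fin n → ℝ) × (Fin n → ℝ)) :=
  (Measure.pi fun _ : Fin L =>
      Measure.pi fun _ : Fin n => Measure.pi fun _ : Fin n => gaussianReal 0 (n : ℝ≥0)⁻¹).prod
    (Measure.pi fun _ : Fin n => gaussianReal 0 (((n : ℝ≥0)) ^ 2)⁻¹)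

/-- The forward pass of the linear residual network at initialization:
`x⁰` is the input and `x^l = x^{l−1} + L^{−α} W^l x^{l−1}` for `1 ≤ l ≤ L`. -/
noncomputable def resX (n : ℕ) (α : ℝ) (x0 : Fin n → ℝ) (L : ℕ)
    (ω : Fin L → Fin n → Fin n → ℝ) : ℕ → Fin n → ℝ
  | 0 => x0
  | l + 1 =>
    resX n α x0 L ω l +
      if h : l < L then
        ((L : ℝ) ^ (-α)) • Matrix.mulVec (Matrix.of (ω ⟨l, h⟩)) (resX n α x0 L ω l)
      else 0

/-- Second moment of an affine function of i.i.d. centred Gaussians. -/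
lemma lintegral_affine_sq {n : ℕ} (v : ℝ≥0) (a : ℝ) (y : Fin n → ℝ) :
    ∫⁻ w, ENNReal.ofReal ((a + ∑ j, w j * y j) ^ 2)
      ∂(Measure.pi fun _ : Fin n => gaussianReal 0 v) =
      ENNReal.ofReal (a ^ 2 + v * ∑ j, y j ^ 2) := by
  set P := Measure.pi fun _ : Fin n => gaussianReal 0 v with hP
  have hid : ∀ j, MemLp (fun t : ℝ => t * y j) 2 (gaussianReal 0 v) := fun j =>
    (memLp_id_gaussianReal' (μ := 0) (v := v) 2 (by simp)).mul_const (y j)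
  have hj : ∀ j, MemLp (fun w : Fin n → ℝ => w j * y j) 2 P := fun j =>
    (hid j).comp_measurePreserving (measurePreserving_eval _ j)
  have hS : MemLp (fun w : Fin n → ℝ => ∑ j, w j * y j) 2 P :=
    memLp_finsetSum _ fun j _ => hj j
  have hX : MemLp (fun w : Fin n → ℝ => a + ∑ j, w j * y j) 2 P := (memLp_const a).add hS
  have hmean : ∫ w, ∑ j, w j * y j ∂P = 0 := by
    rw [integral_finsetSum _ fun j _ => (hj j).integrable one_le_two]
    refine Finset.sum_eq_zero fun j _ => ?_
    have h := integral_comp_eval (μ := fun _ : Fin n => gaussianReal 0 v) (i := j)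
      (f := fun t : ℝ => t * y j) (hid j).aestronglyMeasurable
    rw [hP, h, integral_mul_const, integral_id_gaussianReal, zero_mul]
  have hmean' : ∫ w, (a + ∑ j, w j * y j) ∂P = a := by
    rw [integral_add (integrable_const a) (hS.integrable one_le_two), hmean]
    simp
  have hvar : Var[fun w : Fin n → ℝ => a + ∑ j, w j * y j; P] = v * ∑ j, y j ^ 2 := by
    rw [variance_const_add hS.aestronglyMeasurable]
    have := variance_sum_pi (μ := fun _ : Fin n => gaussianReal 0 v)
      (X := fun j t => t * y j) hid
    have e : (∑ j, fun w : Fin n → ℝ => w j * y j) = fun w => ∑ j, w j * y j := by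
      ext w; simp
    rw [e] at this
    rw [this, Finset.mul_sum]
    refine Finset.sum_congr rfl fun j _ => ?_
    rw [variance_mul_const, variance_fun_id_gaussianReal]
  rw [← ofReal_integral_eq_lintegral_ofReal hX.integrable_sq
    (Eventually.of_forall fun w => sq_nonneg _)]
  congr 1
  have h := variance_eq_sub hX
  rw [hvar, hmean'] at h
  simp only [Pi.pow_apply] at h
  linarith

/-- One layer of the network multiplies the second moment by `1 + c²`. -/
lemma lintegral_layer {n : ℕ} (hn : 1 ≤ n) (c : ℝ) (y : Fin n → ℝ) :
    ∫⁻ w, ENNReal.ofReal (∑ i, (y + c • Matrix.mulVec (Matrix.of w) y) i ^ 2)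
      ∂(Measure.pi fun _ : Fin n => Measure.pi fun _ : Fin n => gaussianReal 0 (n : ℝ≥0)⁻¹) =
      ENNReal.ofReal ((1 + c ^ 2) * ∑ i, y i ^ 2) := by
  have hn' : (n : ℝ) ≠ 0 := by positivity
  have e : ∀ w : Fin n → Fin n → ℝ,
      ENNReal.ofReal (∑ i, (y + c • Matrix.mulVec (Matrix.of w) y) i ^ 2) =
      ∑ i, ENNReal.ofReal ((y i + ∑ j, w i j * (c * y j)) ^ 2) := by
    intro w
    rw [ENNReal.ofReal_sum_of_nonneg fun i _ => sq_nonneg _]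
    refine Finset.sum_congr rfl fun i _ => ?_
    simp only [Pi.add_apply, Pi.smul_apply, Matrix.mulVec, dotProduct, Matrix.of_apply,
      smul_eq_mul, Finset.mul_sum]
    congr 3
    exact Finset.sum_congr rfl fun j _ => by ring
  simp_rw [e]
  rw [lintegral_finsetSum _ fun i _ => by fun_prop]
  have h1 : ∀ i : Fin n, ∫⁻ w : Fin n → Fin n → ℝ,
      ENNReal.ofReal ((y i + ∑ j, w i j * (c * y j)) ^ 2)
      ∂(Measure.pi fun _ : Fin n => Measure.pi fun _ : Fin n => gaussianReal 0 (n : ℝ≥0)⁻¹) =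
      ENNReal.ofReal (y i ^ 2 + ((n : ℝ≥0)⁻¹ : ℝ≥0) * ∑ j, (c * y j) ^ 2) := by
    intro i
    rw [← lintegral_affine_sq]
    exact (measurePreserving_eval (fun _ : Fin n => Measure.pi fun _ : Fin n =>
      gaussianReal 0 (n : ℝ≥0)⁻¹) i).lintegral_comp
      (f := fun u : Fin n → ℝ => ENNReal.ofReal ((y i + ∑ j, u j * (c * y j)) ^ 2))
      (by fun_prop)
  simp_rw [h1]
  rw [← ENNReal.ofReal_sum_of_nonneg fun i _ => by positivity]
  congr 1
  rw [Finset.sum_add_distrib]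
  simp only [Finset.sum_const, Finset.card_univ, Fintype.card_fin, nsmul_eq_mul, mul_pow,
    ← Finset.mul_sum]
  push_cast
  field_simp

lemma resX_measurable (n : ℕ) (α : ℝ) (x0 : Fin n → ℝ) (L l : ℕ) :
    Measurable fun ω => resX n α x0 L ω l := by
  induction l with
  | zero => simp only [resX]; exact measurable_const
  | succ l ih =>
    have ih' : ∀ j, Measurable fun ω => resX n α x0 L ω l j := measurable_pi_iff.1 ih
    refine measurable_pi_iff.2 fun i => ?_
    simp only [resX]
    split_ifs with h
    · simp only [Pi.add_apply, Pi.smul_apply, Matrix.mulVec, dotProduct, Matrix.of_apply,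
        smul_eq_mul]
      fun_prop
    · simpa using ih' i

lemma resX_update (n : ℕ) (α : ℝ) (x0 : Fin n → ℝ) (L : ℕ)
    (ω : Fin L → Fin n → Fin n → ℝ) (k : Fin L) (w : Fin n → Fin n → ℝ) (l : ℕ)
    (hl : l ≤ k) : resX n α x0 L (Function.update ω k w) l = resX n α x0 L ω l := by
  induction l with
  | zero => rfl
  | succ l ih =>
    have hne : ∀ h : l < L, (⟨l, h⟩ : Fin L) ≠ k := by
      intro h e
      rw [← e] at hl
      simp at hl
    simp only [resX, ih (by omega)]
    split_ifs with h
    · rw [Function.update_of_ne (hne h)]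
    · rfl

lemma resX_moment (n : ℕ) (hn : 1 ≤ n) (α : ℝ) (x0 : Fin n → ℝ) (L l : ℕ) (hl : l ≤ L) :
    ∫⁻ ω, ENNReal.ofReal (∑ i, resX n α x0 L ω l i ^ 2)
      ∂(Measure.pi fun _ : Fin L =>
        Measure.pi fun _ : Fin n => Measure.pi fun _ : Fin n => gaussianReal 0 (n : ℝ≥0)⁻¹) =
      ENNReal.ofReal ((1 + ((L : ℝ) ^ (-α)) ^ 2) ^ l * ∑ i, x0 i ^ 2) := by
  induction l with
  | zero => simp [resX]
  | succ l ih =>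
    set c := (L : ℝ) ^ (-α) with hc
    set Q : Measure (Fin n → Fin n → ℝ) :=
      Measure.pi fun _ : Fin n => Measure.pi fun _ : Fin n => gaussianReal 0 (n : ℝ≥0)⁻¹ with hQ
    have hlL : l < L := hl
    have hm : ∀ l i, Measurable fun ω => resX n α x0 L ω l i := fun l =>
      measurable_pi_iff.1 (resX_measurable n α x0 L l)
    have key : ∫⁻ ω, ENNReal.ofReal (∑ i, resX n α x0 L ω (l + 1) i ^ 2)
        ∂(Measure.pi fun _ : Fin L => Q) =
        ∫⁻ ω, ENNReal.ofReal ((1 + c ^ 2) * ∑ i, resX n α x0 L ω l i ^ 2)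
        ∂(Measure.pi fun _ : Fin L => Q) := by
      have hm1 := hm (l + 1)
      have hm2 := hm l
      rw [lintegral_eq_lmarginal_univ 0, lintegral_eq_lmarginal_univ 0,
        lmarginal_erase' _ (by fun_prop) (Finset.mem_univ (⟨l, hlL⟩ : Fin L)),
        lmarginal_erase' _ (by fun_prop) (Finset.mem_univ (⟨l, hlL⟩ : Fin L))]
      congr 2
      ext ω
      have e1 : ∀ w, resX n α x0 L (Function.update ω ⟨l, hlL⟩ w) l = resX n α x0 L ω l :=
        fun w => resX_update n α x0 L ω ⟨l, hlL⟩ w l le_rfl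
      have e2 : ∀ w, resX n α x0 L (Function.update ω ⟨l, hlL⟩ w) (l + 1) =
          resX n α x0 L ω l + c • Matrix.mulVec (Matrix.of w) (resX n α x0 L ω l) := by
        intro w
        rw [resX, e1, dif_pos hlL, Function.update_self]
      simp_rw [e1, e2]
      rw [lintegral_layer hn]
      simp
    rw [key]
    simp_rw [ENNReal.ofReal_mul (show (0 : ℝ) ≤ 1 + c ^ 2 by positivity)]
    have hm2 := hm l
    rw [lintegral_const_mul _ (by fun_prop), ih hlL.le,
      ← ENNReal.ofReal_mul (by positivity)]
    congr 1
    ring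

lemma output_moment (n : ℕ) (hn : 1 ≤ n) (α : ℝ) (x0 : Fin n → ℝ) (L : ℕ) :
    (∫ ω, (∑ i, ω.2 i * resX n α x0 L ω.1 L i) ^ 2 ∂(gaussNetOut n L)) =
      ((n : ℝ) ^ 2)⁻¹ * (1 + (L : ℝ) ^ (-(2 * α))) ^ L * ∑ i, (x0 i) ^ 2 := by
  have hm : ∀ i, Measurable fun ω => resX n α x0 L ω L i :=
    measurable_pi_iff.1 (resX_measurable n α x0 L L)
  have hM : Measurable fun ω : (Fin L → Fin n → Fin n → ℝ) × (Fin n → ℝ) =>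
      (∑ i, ω.2 i * resX n α x0 L ω.1 L i) ^ 2 := by
    have : ∀ i, Measurable fun ω : (Fin L → Fin n → Fin n → ℝ) × (Fin n → ℝ) =>
      resX n α x0 L ω.1 L i := fun i => (hm i).comp measurable_fst
    fun_prop
  rw [integral_eq_lintegral_of_nonneg_ae (Eventually.of_forall fun ω => sq_nonneg _)
    hM.aestronglyMeasurable, gaussNetOut, lintegral_prod _ hM.ennreal_ofReal.aemeasurable]
  have h1 : ∀ ω : Fin L → Fin n → Fin n → ℝ,
      ∫⁻ V, ENNReal.ofReal ((∑ i, V i * resX n α x0 L ω L i) ^ 2)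
        ∂(Measure.pi fun _ : Fin n => gaussianReal 0 (((n : ℝ≥0)) ^ 2)⁻¹) =
      ENNReal.ofReal (((n : ℝ) ^ 2)⁻¹) *
        ENNReal.ofReal (∑ i, resX n α x0 L ω L i ^ 2) := by
    intro ω
    have := lintegral_affine_sq (((n : ℝ≥0)) ^ 2)⁻¹ 0 (resX n α x0 L ω L)
    simp only [zero_add] at this
    rw [this, ← ENNReal.ofReal_mul (by positivity)]
    congr 1
    push_cast
    ring
  simp only [h1]
  rw [lintegral_const_mul _ (by fun_prop), resX_moment n hn α x0 L L le_rfl,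
    ← ENNReal.ofReal_mul (by positivity), ENNReal.toReal_ofReal (by positivity),
    ← Real.rpow_natCast ((L : ℝ) ^ (-α)) 2, ← Real.rpow_mul (by positivity), mul_assoc]
  congr 5
  push_cast
  ring

/-- With `f₀ = Vᵀ x^L`, one has
`E[f₀²] = n^{−2}·(1 + L^{−2α})^L·‖x⁰‖²`; in particular for `α ≥ 1/2` the output second
moment is bounded uniformly over all depths `L ≥ 1`, while for `α < 1/2` it diverges. -/
theorem stmt_17 (n : ℕ) (hn : 1 ≤ n) (α : ℝ) (x0 : Fin n → ℝ) (hx0 : x0 ≠ 0) :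
    (∀ L : ℕ, 1 ≤ L →
      (∫ ω, (∑ i, ω.2 i * resX n α x0 L ω.1 L i) ^ 2 ∂(gaussNetOut n L)) =
        ((n : ℝ) ^ 2)⁻¹ * (1 + (L : ℝ) ^ (-(2 * α))) ^ L * ∑ i, (x0 i) ^ 2) ∧
    (1 / 2 ≤ α → ∃ M : ℝ, ∀ L : ℕ, 1 ≤ L →
      (∫ ω, (∑ i, ω.2 i * resX n α x0 L ω.1 L i) ^ 2 ∂(gaussNetOut n L)) ≤ M) ∧
    (α < 1 / 2 →
      Tendsto (fun L : ℕ => ∫ ω, (∑ i, ω.2 i * resX n α x0 L ω.1 L i) ^ 2 ∂(gaussNetOut n L))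
        atTop atTop) := by
  have hS : 0 < ∑ i, (x0 i) ^ 2 := by
    obtain ⟨i, hi⟩ := Function.ne_iff.1 hx0
    exact Finset.sum_pos' (fun i _ => sq_nonneg _)
      ⟨i, Finset.mem_univ i, by have : x0 i ≠ 0 := hi; positivity⟩
  have hn' : (0 : ℝ) < ((n : ℝ) ^ 2)⁻¹ := by positivity
  simp only [output_moment n hn α x0]
  refine ⟨fun _ _ => trivial, fun hα => ?_, fun hα => ?_⟩
  · refine ⟨((n : ℝ) ^ 2)⁻¹ * Real.exp 1 * ∑ i, (x0 i) ^ 2, fun L hL => ?_⟩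
    have hL' : (1 : ℝ) ≤ L := by exact_mod_cast hL
    have h1 : (L : ℝ) ^ (-(2 * α)) ≤ (L : ℝ)⁻¹ := by
      rw [← Real.rpow_neg_one]
      exact Real.rpow_le_rpow_of_exponent_le hL' (by linarith)
    have h2 : (1 + (L : ℝ) ^ (-(2 * α))) ^ L ≤ Real.exp 1 := by
      calc (1 + (L : ℝ) ^ (-(2 * α))) ^ L ≤ (Real.exp ((L : ℝ)⁻¹)) ^ L := by
            gcongr
            linarith [Real.add_one_le_exp ((L : ℝ)⁻¹)]
        _ = Real.exp 1 := by
            rw [← Real.exp_nat_mul, mul_inv_cancel₀ (by positivity)]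
    gcongr
  · have h1 : Tendsto (fun L : ℕ => (L : ℝ) ^ (1 - 2 * α)) atTop atTop :=
      (tendsto_rpow_atTop (by linarith)).comp tendsto_natCast_atTop_atTop
    have h2 : Tendsto (fun L : ℕ => (1 + (L : ℝ) ^ (-(2 * α))) ^ L) atTop atTop := by
      refine tendsto_atTop_mono' _ ?_ h1
      filter_upwards [eventually_ge_atTop 1] with L hL
      have hL' : (0 : ℝ) < L := by exact_mod_cast hL
      have h0 : 0 ≤ (L : ℝ) ^ (-(2 * α)) := by positivity
      have := one_add_mul_le_pow (show -2 ≤ (L : ℝ) ^ (-(2 * α)) by linarith) L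
      have e : (L : ℝ) ^ (1 - 2 * α) = L * (L : ℝ) ^ (-(2 * α)) := by
        rw [sub_eq_add_neg, Real.rpow_add hL', Real.rpow_one]
      rw [e]
      linarith
    exact (h2.const_mul_atTop hn').atTop_mul_const hS
end
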